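/- arXiv:2112.06690 — 12 statements merged into one kernel-verified Lean document; each statement's English description precedes it below -/
import Mathlib

section
/- Let A be a unital C*-algebra, n,m ≥ 1, q ∈ ℂ, and let s_1,…,s_n, t_1,…,t_m ∈ A satisfy the E_{n,m}^q-relations. Then for the elements t̃_l = (1−Q) t_l one has: s_i* t̃_l = 0 for all i = 1,…,n and l = 1,…,m; t̃_r* t̃_l = 0 for all r ≠ l; and t̃_r* t̃_r = 1 − |q|² Q for all r = 1,…,m. -/
open scoped BigOperators

theorem stmt_3 {A : Type*} [NormedRing A] [StarRing A] [CStarRing A]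
    [NormedAlgebra ℂ A] [StarModule ℂ A] [CompleteSpace A]
    {n m : ℕ} (hn : 1 ≤ n) (hm : 1 ≤ m) (q : ℂ)
    (s : Fin n → A) (t : Fin m → A)
    (hs : ∀ i j : Fin n, star (s i) * s j = if i = j then 1 else 0)
    (ht : ∀ r l : Fin m, star (t r) * t l = if r = l then 1 else 0)
    (hst : ∀ (j : Fin n) (r : Fin m), star (s j) * t r = q • (t r * star (s j)))
    (Q : A) (hQ : Q = ∑ i : Fin n, s i * star (s i))
    (tt : Fin m → A) (htt : ∀ l, tt l = (1 - Q) * t l) :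
    (∀ (i : Fin n) (l : Fin m), star (s i) * tt l = 0) ∧
    (∀ r l : Fin m, r ≠ l → star (tt r) * tt l = 0) ∧
    (∀ r : Fin m, star (tt r) * tt r = 1 - ((‖q‖ ^ 2 : ℝ) : ℂ) • Q) := by
  have h1 : ∀ i, star (s i) * Q = star (s i) := by
    intro i
    rw [hQ, Finset.mul_sum]
    simp only [← mul_assoc, hs, ite_mul, one_mul, zero_mul]
    simp
  have h2 : ∀ (i : Fin n) (l : Fin m), star (s i) * tt l = 0 := by
    intro i l
    rw [htt, ← mul_assoc, mul_sub, mul_one, h1, sub_self, zero_mul]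
  have h3 : ∀ l, Q * tt l = 0 := by
    intro l
    rw [hQ, Finset.sum_mul]
    simp [mul_assoc, h2]
  have hQs : star Q = Q := by
    rw [hQ, star_sum]
    simp
  have h4 : ∀ r l, star (t r) * (Q * t l)
      = ((‖q‖ ^ 2 : ℝ) : ℂ) • (if r = l then Q else 0) := by
    intro r l
    have hq : ((‖q‖ ^ 2 : ℝ) : ℂ) = q * star q := by
      rw [Complex.star_def, Complex.mul_conj, Complex.normSq_eq_norm_sq]
    have h5 : ∀ i, star (t r) * (s i * star (s i) * t l)
        = ((‖q‖ ^ 2 : ℝ) : ℂ) • (if r = l then s i * star (s i) else 0) := by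
      intro i
      have h6 : star (t r) * s i = star q • (s i * star (t r)) := by
        have := congrArg star (hst i r)
        simpa using this
      calc star (t r) * (s i * star (s i) * t l)
          = (star (t r) * s i) * (star (s i) * t l) := by simp only [mul_assoc]
        _ = (q * star q) • (s i * (star (t r) * t l) * star (s i)) := by
            rw [h6, hst, smul_mul_smul_comm, mul_comm q]
            simp only [mul_assoc]
        _ = _ := by
            rw [hq, ht]
            split_ifs <;> simp
    rw [hQ, Finset.sum_mul, Finset.mul_sum, Finset.sum_congr rfl (fun i _ => h5 i),
      ← Finset.smul_sum]
    split_ifs <;> simp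
  have h7 : ∀ r l, star (tt r) * tt l = (if r = l then 1 else 0)
      - ((‖q‖ ^ 2 : ℝ) : ℂ) • (if r = l then Q else 0) := by
    intro r l
    calc star (tt r) * tt l = star (t r) * tt l := by
          rw [htt r, star_mul, star_sub, star_one, hQs, mul_assoc, sub_mul, h3, one_mul, sub_zero]
      _ = _ := by
          rw [htt l, sub_mul, one_mul, mul_sub, ht, h4]
  refine ⟨h2, ?_, ?_⟩
  · intro r l hrl
    rw [h7, if_neg hrl, if_neg hrl, smul_zero, sub_zero]
  · intro r
    rw [h7, if_pos rfl, if_pos rfl]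
end

section
/- Let A be a unital C*-algebra, n,m ≥ 1, q ∈ ℂ with |q| < 1, and let s_1,…,s_n, t_1,…,t_m ∈ A satisfy the E_{n,m}^q-relations. Then for each r = 1,…,m the partial sums S_N = Σ_{k=0}^{N} q^k Σ_{μ ∈ {1,…,n}^k} s_μ t̃_r s_μ* converge in norm to t_r as N → ∞; equivalently, S_N = t_r − q^{N+1} Σ_{μ ∈ {1,…,n}^{N+1}} s_μ t_r s_μ* for every N, and the remainder tends to 0 in norm. -/
open scoped BigOperators

/-- Product `s_{μ_1} ⋯ s_{μ_k}` associated to a word `μ ∈ {1,…,n}^k`. -/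
noncomputable def wordProd {A : Type*} [Monoid A] {n k : ℕ} (s : Fin n → A)
    (μ : Fin k → Fin n) : A :=
  (List.ofFn fun i => s (μ i)).prod

/-- The map `x ↦ ∑ i, s i * x * star (s i)`. -/
noncomputable def phiMap {A : Type*} [NormedRing A] [StarRing A]
    {n : ℕ} (s : Fin n → A) (x : A) : A := ∑ i : Fin n, s i * x * star (s i)

theorem phiMap_iter {A : Type*} [NormedRing A] [StarRing A]
    {n : ℕ} (s : Fin n → A) (x : A) (k : ℕ) :
    ∑ μ : Fin k → Fin n, wordProd s μ * x * star (wordProd s μ) = (phiMap s)^[k] x := by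
  induction k with
  | zero => simp [wordProd]
  | succ k ih =>
    rw [Function.iterate_succ_apply', ← ih, phiMap,
      ← (Fin.consEquiv (fun _ : Fin (k + 1) => Fin n)).sum_comp, Fintype.sum_prod_type]
    refine Finset.sum_congr rfl fun i _ => ?_
    rw [Finset.mul_sum, Finset.sum_mul]
    refine Finset.sum_congr rfl fun μ _ => ?_
    have h : wordProd s ((Fin.consEquiv (fun _ : Fin (k + 1) => Fin n)) (i, μ))
        = s i * wordProd s μ := by
      simp [wordProd, Fin.consEquiv, List.ofFn_succ]
    rw [h, star_mul]
    simp only [mul_assoc]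

theorem phiMap_star_mul {A : Type*} [NormedRing A] [StarRing A]
    {n : ℕ} (s : Fin n → A)
    (hs : ∀ i j : Fin n, star (s i) * s j = if i = j then 1 else 0) (x y : A) :
    star (phiMap s x) * phiMap s y = phiMap s (star x * y) := by
  simp only [phiMap, star_sum, Finset.sum_mul_sum, star_mul, star_star]
  refine Finset.sum_congr rfl fun i _ => ?_
  have h : ∀ j, s i * (star x * star (s i)) * (s j * y * star (s j))
      = if i = j then s i * (star x * y) * star (s i) else 0 := by
    intro j
    have : s i * (star x * star (s i)) * (s j * y * star (s j))
      = s i * star x * (star (s i) * s j) * y * star (s j) := by simp only [mul_assoc]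
    rw [this, hs]
    split_ifs with hij
    · subst hij; simp [mul_assoc]
    · simp
  simp [h]

theorem phiMap_iter_star_mul {A : Type*} [NormedRing A] [StarRing A]
    {n : ℕ} (s : Fin n → A)
    (hs : ∀ i j : Fin n, star (s i) * s j = if i = j then 1 else 0) (k : ℕ) (x y : A) :
    star ((phiMap s)^[k] x) * (phiMap s)^[k] y = (phiMap s)^[k] (star x * y) := by
  induction k with
  | zero => rfl
  | succ k ih => simp only [Function.iterate_succ_apply', phiMap_star_mul s hs, ih]

theorem phiMap_iter_norm {A : Type*} [NormedRing A] [StarRing A] [CStarRing A]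
    {n : ℕ} (s : Fin n → A)
    (hs : ∀ i j : Fin n, star (s i) * s j = if i = j then 1 else 0) (k : ℕ) (x : A)
    (hx : star x * x = 1) : ‖(phiMap s)^[k] x‖ ≤ 1 := by
  have key : ∀ y : A, star y * y = 1 →
      ‖(phiMap s)^[k] y‖ * ‖(phiMap s)^[k] y‖ = ‖(phiMap s)^[k] (1 : A)‖ := by
    intro y hy
    rw [← CStarRing.norm_star_mul_self, phiMap_iter_star_mul s hs, hy]
  have h1 := key 1 (by simp)
  have h2 := key x hx
  nlinarith [norm_nonneg ((phiMap s)^[k] x), norm_nonneg ((phiMap s)^[k] (1 : A)),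
    sq_nonneg (‖(phiMap s)^[k] (1 : A)‖ - 1)]

theorem phiMap_iter_sub_smul {A : Type*} [NormedRing A] [StarRing A] [NormedAlgebra ℂ A]
    {n : ℕ} (s : Fin n → A) (q : ℂ) (k : ℕ) (x y : A) :
    (phiMap s)^[k] (x - q • y) = (phiMap s)^[k] x - q • (phiMap s)^[k] y := by
  induction k with
  | zero => rfl
  | succ k ih =>
    simp only [Function.iterate_succ_apply', ih]
    simp [phiMap, mul_sub, sub_mul, Finset.smul_sum]

theorem stmt_4 {A : Type*} [NormedRing A] [StarRing A] [CStarRing A]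
    [NormedAlgebra ℂ A] [StarModule ℂ A] [CompleteSpace A]
    {n m : ℕ} (hn : 1 ≤ n) (hm : 1 ≤ m) (q : ℂ) (hq : ‖q‖ < 1)
    (s : Fin n → A) (t : Fin m → A)
    (hs : ∀ i j : Fin n, star (s i) * s j = if i = j then 1 else 0)
    (ht : ∀ r l : Fin m, star (t r) * t l = if r = l then 1 else 0)
    (hst : ∀ (j : Fin n) (r : Fin m), star (s j) * t r = q • (t r * star (s j)))
    (Q : A) (hQ : Q = ∑ i : Fin n, s i * star (s i))
    (tt : Fin m → A) (htt : ∀ l, tt l = (1 - Q) * t l)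
    (S : Fin m → ℕ → A)
    (hS : ∀ r N, S r N = ∑ k ∈ Finset.range (N + 1),
      q ^ k • ∑ μ : Fin k → Fin n, wordProd s μ * tt r * star (wordProd s μ)) :
    ∀ r : Fin m,
      (∀ N : ℕ, S r N = t r - q ^ (N + 1) •
        ∑ μ : Fin (N + 1) → Fin n, wordProd s μ * t r * star (wordProd s μ)) ∧
      Filter.Tendsto (fun N : ℕ => q ^ (N + 1) •
        ∑ μ : Fin (N + 1) → Fin n, wordProd s μ * t r * star (wordProd s μ))
        Filter.atTop (nhds 0) ∧
      Filter.Tendsto (fun N : ℕ => S r N) Filter.atTop (nhds (t r)) := by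
  intro r
  have htr : tt r = t r - q • phiMap s (t r) := by
    rw [htt, hQ, sub_mul, one_mul, Finset.sum_mul, phiMap, Finset.smul_sum]
    congr 1
    refine Finset.sum_congr rfl fun i _ => ?_
    rw [mul_assoc, hst, mul_smul_comm, mul_assoc]
  have h1 : ∀ N : ℕ, S r N = t r - q ^ (N + 1) •
        ∑ μ : Fin (N + 1) → Fin n, wordProd s μ * t r * star (wordProd s μ) := by
    intro N
    rw [hS]
    simp only [phiMap_iter, htr, phiMap_iter_sub_smul, ← Function.iterate_succ_apply,
      smul_sub, smul_smul, ← pow_succ]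
    rw [Finset.sum_range_sub' (fun k => q ^ k • (phiMap s)^[k] (t r))]
    simp
  have h2 : Filter.Tendsto (fun N : ℕ => q ^ (N + 1) •
        ∑ μ : Fin (N + 1) → Fin n, wordProd s μ * t r * star (wordProd s μ))
        Filter.atTop (nhds 0) := by
    simp only [phiMap_iter]
    refine squeeze_zero_norm (a := fun N : ℕ => ‖q‖ ^ (N + 1)) (fun N => ?_) ?_
    · rw [norm_smul, norm_pow]
      exact mul_le_of_le_one_right (by positivity)
        (phiMap_iter_norm s hs _ _ (by simpa using ht r r))
    · exact (tendsto_pow_atTop_nhds_zero_of_lt_one (norm_nonneg q) hq).comp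
        (Filter.tendsto_add_atTop_nat 1)
  refine ⟨h1, h2, ?_⟩
  simp only [h1]
  simpa using h2.const_sub (t r)
end

section
/- Let A be a unital C*-algebra, n,m ≥ 1, q ∈ ℂ with |q| < 1, and let s_1,…,s_n, t_1,…,t_m ∈ A satisfy the E_{n,m}^q-relations. Define c = (1−Q) + (1−|q|²)^{−1/2} Q (the inverse of the positive square root of 1 − |q|² Q, since Q is a projection) and t̂_r = (1−Q) t_r c for r = 1,…,m. Then s_i* t̂_r = 0 for all i = 1,…,n and r = 1,…,m, and t̂_r* t̂_l = δ_{rl}·1 for all r,l = 1,…,m; in particular each t̂_r is an isometry. -/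
open scoped BigOperators

theorem stmt_5 {A : Type*} [NormedRing A] [StarRing A] [CStarRing A]
    [NormedAlgebra ℂ A] [StarModule ℂ A] [CompleteSpace A]
    {n m : ℕ} (hn : 1 ≤ n) (hm : 1 ≤ m) (q : ℂ) (hq : ‖q‖ < 1)
    (s : Fin n → A) (t : Fin m → A)
    (hs : ∀ i j : Fin n, star (s i) * s j = if i = j then 1 else 0)
    (ht : ∀ r l : Fin m, star (t r) * t l = if r = l then 1 else 0)
    (hst : ∀ (j : Fin n) (r : Fin m), star (s j) * t r = q • (t r * star (s j)))
    (Q : A) (hQ : Q = ∑ i : Fin n, s i * star (s i))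
    (c : A) (hc : c = (1 - Q) + (((Real.sqrt (1 - ‖q‖ ^ 2))⁻¹ : ℝ) : ℂ) • Q)
    (th : Fin m → A) (hth : ∀ r, th r = (1 - Q) * t r * c) :
    (∀ (i : Fin n) (r : Fin m), star (s i) * th r = 0) ∧
    (∀ r l : Fin m, star (th r) * th l = if r = l then 1 else 0) := by
  have hsQ : ∀ i, star (s i) * Q = star (s i) := by
    intro i
    rw [hQ, Finset.mul_sum]
    simp [← mul_assoc, hs]
  have hQQ : Q * Q = Q := by
    have h0 : Q * Q = (∑ i : Fin n, s i * star (s i)) * Q := congrArg (· * Q) hQ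
    rw [h0, Finset.sum_mul]
    simp only [mul_assoc, hsQ]
    exact hQ.symm
  have hQs : star Q = Q := by
    rw [hQ, star_sum]
    simp
  have htQ : ∀ r l, star (t r) * (Q * t l) =
      if r = l then (((‖q‖ ^ 2 : ℝ) : ℂ)) • Q else 0 := by
    intro r l
    have key : ∀ i, star (t r) * (s i * star (s i) * t l) =
        ((‖q‖ ^ 2 : ℝ) : ℂ) • (s i * ((if r = l then 1 else 0) * star (s i))) := by
      intro i
      have h1 : star (t r) * s i = star q • (s i * star (t r)) := by
        have := congrArg star (hst i r)
        simpa using this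
      have h2 : star q * q = ((‖q‖ ^ 2 : ℝ) : ℂ) := by
        have := Complex.conj_mul' q
        push_cast
        exact this
      calc star (t r) * (s i * star (s i) * t l)
          = (star (t r) * s i) * (star (s i) * t l) := by noncomm_ring
        _ = (star q * q) • (s i * ((star (t r) * t l) * star (s i))) := by
          rw [h1, hst, smul_mul_smul_comm]
          simp only [mul_assoc]
        _ = _ := by rw [h2, ht]
    conv_lhs => rw [hQ]
    rw [Finset.sum_mul, Finset.mul_sum]
    simp only [key]
    split_ifs with h
    · simp [hQ, Finset.smul_sum]
    · simp
  refine ⟨?_, ?_⟩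
  · intro i r
    rw [hth, ← mul_assoc, ← mul_assoc, mul_sub, hsQ]
    simp
  · intro r l
    have hpos : 0 < 1 - ‖q‖ ^ 2 := by nlinarith [norm_nonneg q]
    have ha : (Real.sqrt (1 - ‖q‖ ^ 2))⁻¹ * (Real.sqrt (1 - ‖q‖ ^ 2))⁻¹ * (1 - ‖q‖ ^ 2) = 1 := by
      rw [← mul_inv, Real.mul_self_sqrt hpos.le]
      exact inv_mul_cancel₀ hpos.ne'
    generalize (Real.sqrt (1 - ‖q‖ ^ 2))⁻¹ = a at ha hc
    generalize ‖q‖ ^ 2 = k at ha htQ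
    have haC : (a : ℂ) * a * (1 - k) = 1 := by exact_mod_cast ha
    have hcs : star c = c := by
      rw [hc]
      simp [hQs]
    have hPP : (1 - Q) * (1 - Q) = 1 - Q := by
      simp [mul_sub, sub_mul, hQQ]
    have e1 : star (th r) * th l =
        c * (star (t r) * t l - star (t r) * (Q * t l)) * c := by
      rw [hth, hth, star_mul, star_mul, hcs, star_sub, hQs, star_one]
      calc _ = c * (star (t r) * (((1 - Q) * (1 - Q)) * t l)) * c := by
            simp only [mul_assoc]
        _ = _ := by rw [hPP, sub_mul, mul_sub, one_mul]
    rw [e1, ht, htQ]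
    split_ifs with h
    · have e2 : c * (1 - (k : ℂ) • Q) * c = (1 - Q) + ((a : ℂ) * a * (1 - k)) • Q := by
        rw [hc]
        simp only [mul_sub, sub_mul, mul_add, add_mul, mul_one, one_mul, smul_mul_assoc,
          mul_smul_comm, hQQ]
        module
      rw [e2, haC]
      simp
    · simp
end

section
/- Let A be a unital C*-algebra, n,m ≥ 1, q ∈ ℂ with |q| < 1, and let s_1,…,s_n, t_1,…,t_m ∈ A satisfy the E_{n,m}^q-relations. With c = (1−Q) + (1−|q|²)^{−1/2} Q and t̂_r = (1−Q) t_r c, the topological closure of the *-subalgebra of A generated by {s_1,…,s_n, t̂_1,…,t̂_m} equals the topological closure of the *-subalgebra of A generated by {s_1,…,s_n, t_1,…,t_m}. -/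
open scoped BigOperators

theorem phi_mul_aux {A : Type*} [NormedRing A] [StarRing A] {n : ℕ} (s : Fin n → A)
    (hs : ∀ i j : Fin n, star (s i) * s j = if i = j then 1 else 0) (x y : A) :
    (∑ i, s i * x * star (s i)) * (∑ i, s i * y * star (s i))
      = ∑ i, s i * (x * y) * star (s i) := by
  rw [Finset.sum_mul_sum]
  refine Finset.sum_congr rfl fun i _ => ?_
  have h : ∀ j, s i * x * star (s i) * (s j * y * star (s j))
      = if i = j then s i * (x * y) * star (s i) else 0 := by
    intro j
    have : s i * x * star (s i) * (s j * y * star (s j))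
      = s i * x * (star (s i) * s j) * y * star (s j) := by simp only [mul_assoc]
    rw [this, hs]
    split_ifs with hij
    · subst hij; simp only [mul_assoc, one_mul]
    · simp
  simp [h]

theorem phi_star_aux {A : Type*} [NormedRing A] [StarRing A] {n : ℕ} (s : Fin n → A) (x : A) :
    star (∑ i, s i * x * star (s i)) = ∑ i, s i * star x * star (s i) := by
  simp [star_sum, mul_assoc]

theorem norm_le_aux {A : Type*} [NormedRing A] [StarRing A] [CStarRing A] (u p : A)
    (hu : star u * u = p) (hp : star p = p) (hpp : p * p = p) : ‖u‖ ≤ 1 := by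
  have h1 : ‖u‖ * ‖u‖ = ‖p‖ := by rw [← CStarRing.norm_star_mul_self, hu]
  have h2 : ‖p‖ * ‖p‖ = ‖p‖ := by rw [← CStarRing.norm_star_mul_self, hp, hpp]
  by_contra! h
  have h3 : 1 < ‖p‖ := by nlinarith
  nlinarith

theorem stmt_6 {A : Type*} [NormedRing A] [StarRing A] [CStarRing A]
    [NormedAlgebra ℂ A] [StarModule ℂ A] [CompleteSpace A]
    {n m : ℕ} (hn : 1 ≤ n) (hm : 1 ≤ m) (q : ℂ) (hq : ‖q‖ < 1)
    (s : Fin n → A) (t : Fin m → A)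
    (hs : ∀ i j : Fin n, star (s i) * s j = if i = j then 1 else 0)
    (ht : ∀ r l : Fin m, star (t r) * t l = if r = l then 1 else 0)
    (hst : ∀ (j : Fin n) (r : Fin m), star (s j) * t r = q • (t r * star (s j)))
    (Q : A) (hQ : Q = ∑ i : Fin n, s i * star (s i))
    (c : A) (hc : c = (1 - Q) + (((Real.sqrt (1 - ‖q‖ ^ 2))⁻¹ : ℝ) : ℂ) • Q)
    (th : Fin m → A) (hth : ∀ r, th r = (1 - Q) * t r * c) :
    (StarAlgebra.adjoin ℂ (Set.range s ∪ Set.range th)).topologicalClosure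
      = (StarAlgebra.adjoin ℂ (Set.range s ∪ Set.range t)).topologicalClosure := by
  have hr : 0 < Real.sqrt (1 - ‖q‖ ^ 2) := by
    apply Real.sqrt_pos.mpr
    nlinarith [norm_nonneg q]
  set ρ := Real.sqrt (1 - ‖q‖ ^ 2) with hρ
  have hQQ : Q * Q = Q := by
    have := phi_mul_aux s hs 1 1
    simp only [mul_one] at this
    rw [hQ, this]
  have hQmem : ∀ B : StarSubalgebra ℂ A, (∀ i, s i ∈ B) → Q ∈ B := by
    intro B hB
    rw [hQ]
    exact sum_mem fun i _ => mul_mem (hB i) (star_mem (hB i))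
  apply le_antisymm
  · apply StarSubalgebra.topologicalClosure_mono
    apply StarAlgebra.adjoin_le
    set B := StarAlgebra.adjoin ℂ (Set.range s ∪ Set.range t) with hB
    have hsB : ∀ i, s i ∈ B := fun i => StarAlgebra.subset_adjoin ℂ _ (Or.inl ⟨i, rfl⟩)
    have htB : ∀ i, t i ∈ B := fun i => StarAlgebra.subset_adjoin ℂ _ (Or.inr ⟨i, rfl⟩)
    have hQB := hQmem B hsB
    rintro _ (⟨i, rfl⟩ | ⟨r, rfl⟩)
    · exact hsB i
    · change th r ∈ B
      rw [hth, hc]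
      exact mul_mem (mul_mem (sub_mem (one_mem _) hQB) (htB r))
        (add_mem (sub_mem (one_mem _) hQB) (B.smul_mem hQB _))
  · set B := StarAlgebra.adjoin ℂ (Set.range s ∪ Set.range th) with hB
    have hsB : ∀ i, s i ∈ B := fun i => StarAlgebra.subset_adjoin ℂ _ (Or.inl ⟨i, rfl⟩)
    have htB : ∀ i, th i ∈ B := fun i => StarAlgebra.subset_adjoin ℂ _ (Or.inr ⟨i, rfl⟩)
    have hQB := hQmem B hsB
    have hcc : c * ((1 - Q) + (ρ : ℂ) • Q) = 1 := by
      have hρ0 : (ρ : ℂ) ≠ 0 := by exact_mod_cast hr.ne'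
      rw [hc]
      simp only [mul_add, add_mul, mul_sub, sub_mul, mul_one, one_mul, smul_mul_assoc,
        mul_smul_comm, hQQ, sub_self]
      push_cast
      rw [zero_add, smul_smul, mul_inv_cancel₀ hρ0, one_smul]
      abel
    have htt : ∀ r, (1 - Q) * t r ∈ B := by
      intro r
      have : (1 - Q) * t r = th r * ((1 - Q) + (ρ : ℂ) • Q) := by
        rw [hth, mul_assoc _ c, hcc, mul_one]
      rw [this]
      exact mul_mem (htB r) (add_mem (sub_mem (one_mem _) hQB) (B.smul_mem hQB _))
    have hrec : ∀ r, t r = (1 - Q) * t r + q • ∑ i, s i * t r * star (s i) := by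
      intro r
      have : Q * t r = q • ∑ i, s i * t r * star (s i) := by
        rw [hQ, Finset.sum_mul, Finset.smul_sum]
        refine Finset.sum_congr rfl fun i _ => ?_
        rw [mul_assoc, hst, mul_smul_comm, mul_assoc]
      rw [← this, sub_mul, one_mul, sub_add_cancel]
    have key : ∀ r (k : ℕ), ∃ u p : A, t r - q ^ k • u ∈ B ∧ star u * u = p ∧ star p = p
        ∧ p * p = p := by
      intro r k
      induction k with
      | zero => exact ⟨t r, 1, by simp, by simp [ht], by simp, by simp⟩
      | succ k ih =>
        obtain ⟨u, p, h1, h2, h3, h4⟩ := ih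
        refine ⟨∑ i, s i * u * star (s i), ∑ i, s i * p * star (s i), ?_, ?_, ?_, ?_⟩
        · have : t r - q ^ (k + 1) • ∑ i, s i * u * star (s i)
            = (1 - Q) * t r + q • ∑ i, s i * (t r - q ^ k • u) * star (s i) := by
            conv_lhs => rw [hrec r]
            simp only [mul_sub, sub_mul, Finset.sum_sub_distrib, smul_sub, mul_smul_comm,
              smul_mul_assoc, ← Finset.smul_sum, smul_smul, pow_succ']
            abel
          rw [this]
          exact add_mem (htt r) (B.smul_mem
            (sum_mem fun i _ => mul_mem (mul_mem (hsB i) h1) (star_mem (hsB i))) _)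
        · rw [phi_star_aux, phi_mul_aux s hs, h2]
        · rw [phi_star_aux, h3]
        · rw [phi_mul_aux s hs, h4]
    have htcl : ∀ r, t r ∈ B.topologicalClosure := by
      intro r
      choose u p h1 h2 h3 h4 using key r
      have hlim : Filter.Tendsto (fun k => t r - q ^ k • u k) Filter.atTop (nhds (t r)) := by
        have h0 : Filter.Tendsto (fun k => q ^ k • u k) Filter.atTop (nhds 0) := by
          refine squeeze_zero_norm (a := fun k => ‖q‖ ^ k) (fun k => ?_)
            (tendsto_pow_atTop_nhds_zero_of_lt_one (norm_nonneg q) hq)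
          rw [norm_smul, norm_pow]
          exact mul_le_of_le_one_right (by positivity)
            (norm_le_aux _ _ (h2 k) (h3 k) (h4 k))
        simpa using tendsto_const_nhds.sub h0
      exact mem_closure_of_tendsto hlim (Filter.Eventually.of_forall h1)
    apply StarSubalgebra.topologicalClosure_minimal _ (StarSubalgebra.isClosed_topologicalClosure B)
    apply StarAlgebra.adjoin_le
    rintro _ (⟨i, rfl⟩ | ⟨r, rfl⟩)
    · exact B.le_topologicalClosure (hsB i)
    · exact htcl r
end

section
/- Let A be a unital C*-algebra, n,m ≥ 1, q ∈ ℂ with |q| < 1, and let v_1,…,v_{n+m} ∈ A satisfy the Cuntz–Toeplitz relations. Set Q̃ = Σ_{i=1}^n v_i v_i* and, for r = 1,…,m, w̃_r = v_{n+r}·((1−Q̃) + (1−|q|²)^{1/2} Q̃) (the second factor being the positive square root of 1 − |q|² Q̃, since Q̃ is a projection). Then for each r the series Σ_{k≥0} q^k Σ_{μ ∈ {1,…,n}^k} v_μ w̃_r v_μ* converges in norm in A, and its sum w_r satisfies w_r* w_l = δ_{rl}·1 for all r,l = 1,…,m and v_i* w_r = q w_r v_i* for all i = 1,…,n and r = 1,…,m.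 -/
open scoped BigOperators

section Helpers

variable {A : Type*} [CStarAlgebra A] {n : ℕ}

/-- The map `x ↦ ∑ v_i x v_i*` as a non-unital star homomorphism. -/
noncomputable def ctPhi (s : Fin n → A)
    (hs : ∀ i j, star (s i) * s j = if i = j then 1 else 0) : A →⋆ₙₐ[ℂ] A where
  toFun x := ∑ i, s i * x * star (s i)
  map_smul' c x := by simp [Finset.smul_sum]
  map_zero' := by simp
  map_add' x y := by simp [mul_add, add_mul, Finset.sum_add_distrib]
  map_mul' x y := by
    rw [Finset.sum_mul_sum]
    refine Finset.sum_congr rfl fun i _ => ?_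
    have h : ∀ j, s i * x * star (s i) * (s j * y * star (s j))
        = if i = j then s i * (x * y) * star (s i) else 0 := by
      intro j
      have : s i * x * star (s i) * (s j * y * star (s j))
        = s i * x * (star (s i) * s j) * y * star (s j) := by simp only [mul_assoc]
      rw [this, hs]
      split_ifs with hij
      · subst hij; simp [mul_assoc]
      · simp
    simp [h]
  map_star' x := by simp [star_sum, mul_assoc]

theorem ctPhi_apply (s : Fin n → A) (hs) (x : A) :
    ctPhi s hs x = ∑ i, s i * x * star (s i) := rfl

theorem ctPhi_norm (s : Fin n → A) (hs) (x : A) : ‖ctPhi s hs x‖ ≤ ‖x‖ :=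
  NonUnitalStarAlgHom.norm_apply_le (ctPhi s hs) x

theorem star_mul_ctPhi (s : Fin n → A) (hs) (x : A) (i : Fin n) :
    star (s i) * ctPhi s hs x = x * star (s i) := by
  rw [ctPhi_apply, Finset.mul_sum]
  have h : ∀ j, star (s i) * (s j * x * star (s j))
        = if i = j then x * star (s i) else 0 := by
    intro j
    rw [← mul_assoc, ← mul_assoc, hs]
    split_ifs with hij
    · subst hij; simp
    · simp
  simp [h]

theorem sum_word_succ (s : Fin n → A) (hs) (x : A) (k : ℕ) :
    ∑ μ : Fin (k + 1) → Fin n, wordProd s μ * x * star (wordProd s μ)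
      = ctPhi s hs (∑ μ : Fin k → Fin n, wordProd s μ * x * star (wordProd s μ)) := by
  rw [ctPhi_apply, ← (Fin.consEquiv fun _ => Fin n).sum_comp, Fintype.sum_prod_type]
  refine Finset.sum_congr rfl fun i _ => ?_
  rw [Finset.mul_sum, Finset.sum_mul]
  refine Finset.sum_congr rfl fun μ _ => ?_
  simp [wordProd, Fin.consEquiv, List.ofFn_succ, mul_assoc]

end Helpers

theorem stmt_7 {A : Type*} [NormedRing A] [StarRing A] [CStarRing A]
    [NormedAlgebra ℂ A] [StarModule ℂ A] [CompleteSpace A]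
    {n m : ℕ} (hn : 1 ≤ n) (hm : 1 ≤ m) (q : ℂ) (hq : ‖q‖ < 1)
    (v : Fin (n + m) → A)
    (hct : ∀ i j : Fin (n + m), star (v i) * v j = if i = j then 1 else 0)
    (Q : A) (hQ : Q = ∑ i : Fin n, v (Fin.castAdd m i) * star (v (Fin.castAdd m i)))
    (wt : Fin m → A)
    (hwt : ∀ r, wt r = v (Fin.natAdd n r) *
      ((1 - Q) + ((Real.sqrt (1 - ‖q‖ ^ 2) : ℝ) : ℂ) • Q))
    (f : Fin m → ℕ → A)
    (hf : ∀ r k, f r k = q ^ k • ∑ μ : Fin k → Fin n,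
      wordProd (fun i => v (Fin.castAdd m i)) μ * wt r *
        star (wordProd (fun i => v (Fin.castAdd m i)) μ)) :
    (∀ r : Fin m, Summable (f r)) ∧
    (∀ r l : Fin m, star (∑' k, f r k) * (∑' k, f l k) = if r = l then 1 else 0) ∧
    (∀ (i : Fin n) (r : Fin m),
      star (v (Fin.castAdd m i)) * (∑' k, f r k)
        = q • ((∑' k, f r k) * star (v (Fin.castAdd m i)))) := by
  letI : CStarAlgebra A := {}
  set s : Fin n → A := fun i => v (Fin.castAdd m i) with hsdef
  have hs : ∀ i j, star (s i) * s j = if i = j then 1 else 0 := by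
    intro i j
    simp [s, hct]
  set Φ := ctPhi s hs with hΦ
  have hQ1 : Q = Φ 1 := by simp [hQ, hΦ, ctPhi_apply, s]
  have hf0 : ∀ r, f r 0 = wt r := by
    intro r
    simp [hf, wordProd]
  have hfs : ∀ r k, f r (k + 1) = q • Φ (f r k) := by
    intro r k
    rw [hf, hf, sum_word_succ s hs, map_smul, smul_smul, pow_succ']
  have hnorm : ∀ r k, ‖f r k‖ ≤ ‖wt r‖ * ‖q‖ ^ k := by
    intro r k
    induction k with
    | zero => simp [hf0]
    | succ k ih =>
      rw [hfs, norm_smul, pow_succ']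
      have h1 := (ctPhi_norm s hs (f r k)).trans ih
      calc ‖q‖ * ‖Φ (f r k)‖ ≤ ‖q‖ * (‖wt r‖ * ‖q‖ ^ k) := by gcongr
        _ = _ := by ring
  have hsum : ∀ r, Summable (f r) := fun r =>
    Summable.of_norm_bounded
      ((summable_geometric_of_lt_one (norm_nonneg q) hq).mul_left ‖wt r‖) (hnorm r)
  have hcont : Continuous Φ :=
    AddMonoidHomClass.continuous_of_bound Φ 1 (fun x => by
      simpa using ctPhi_norm s hs x)
  have hw : ∀ r, (∑' k, f r k) = wt r + q • Φ (∑' k, f r k) := by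
    intro r
    conv_lhs => rw [(hsum r).tsum_eq_zero_add, hf0]
    congr 1
    have h1 : HasSum (fun k => q • Φ (f r k)) (q • Φ (∑' k, f r k)) :=
      ((hsum r).hasSum.map Φ hcont).const_smul q
    simp only [hfs]
    exact h1.tsum_eq
  have hvs : ∀ i r, star (s i) * v (Fin.natAdd n r) = 0 := by
    intro i r
    simp only [s, hct]
    rw [if_neg]
    intro h
    have := congrArg Fin.val h
    simp at this
    omega
  have hswt : ∀ i r, star (s i) * wt r = 0 := by
    intro i r
    rw [hwt, ← mul_assoc, hvs, zero_mul]
  have hPwt : ∀ x r, Φ x * wt r = 0 := by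
    intro x r
    rw [hΦ, ctPhi_apply, Finset.sum_mul]
    exact Finset.sum_eq_zero fun i _ => by rw [mul_assoc, hswt, mul_zero]
  have hwtP : ∀ x r, star (wt r) * Φ x = 0 := by
    intro x r
    have := congrArg star (hPwt (star x) r)
    simpa [map_star] using this
  have hQQ : Q * Q = Q := by rw [hQ1, ← map_mul, mul_one]
  have hQs : star Q = Q := by rw [hQ1, ← map_star, star_one]
  have hss : ((Real.sqrt (1 - ‖q‖ ^ 2) : ℝ) : ℂ) * ((Real.sqrt (1 - ‖q‖ ^ 2) : ℝ) : ℂ)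
      = 1 - (‖q‖ : ℂ) ^ 2 := by
    rw [← Complex.ofReal_mul, Real.mul_self_sqrt (by nlinarith [norm_nonneg q])]
    push_cast; rfl
  have hwtwt : ∀ r l, star (wt r) * wt l
      = if r = l then 1 - ((‖q‖ : ℂ) ^ 2) • Q else 0 := by
    intro r l
    rw [hwt, hwt, star_mul]
    rw [mul_assoc, ← mul_assoc (star (v _)), hct]
    by_cases h : r = l
    · subst h
      have hc : star ((Real.sqrt (1 - ‖q‖ ^ 2) : ℝ) : ℂ)
        = ((Real.sqrt (1 - ‖q‖ ^ 2) : ℝ) : ℂ) := Complex.conj_ofReal _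
      rw [if_pos rfl, if_pos rfl, one_mul, star_add, star_sub, star_one, star_smul, hQs, hc]
      rw [add_mul, mul_add, mul_add, smul_mul_smul_comm, hss, mul_smul_comm, smul_mul_assoc]
      simp only [sub_mul, mul_sub, one_mul, mul_one, hQQ, sub_self, smul_zero, sub_smul, one_smul]
      abel
    · simp [h]
  refine ⟨hsum, ?_, ?_⟩
  · intro r l
    set a := ∑' k, f r k with ha
    set b := ∑' k, f l k with hb
    have e : star a * b = star (wt r) * wt l + ((‖q‖ : ℂ) ^ 2) • Φ (star a * b) := by
      have hwa : a = wt r + q • Φ a := hw r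
      have hwb : b = wt l + q • Φ b := hw l
      conv_lhs => rw [hwa, hwb]
      have h1 : star (Φ a) * wt l = 0 := by rw [← map_star, hPwt]
      rw [star_add, star_smul, add_mul, mul_add, mul_add, mul_smul_comm, hwtP,
        smul_mul_assoc, h1, smul_mul_smul_comm, ← map_star, ← map_mul]
      have h2 : star q * q = (‖q‖ : ℂ) ^ 2 := by
        simpa using Complex.conj_mul' q
      rw [h2]
      simp
    have key : ∀ X : A, X = ((‖q‖ : ℂ) ^ 2) • Φ X → X = 0 := by
      intro X hX
      have h1 : ‖X‖ ≤ ‖q‖ ^ 2 * ‖X‖ := by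
        calc ‖X‖ = ‖((‖q‖ : ℂ) ^ 2) • Φ X‖ := by rw [← hX]
          _ = ‖q‖ ^ 2 * ‖Φ X‖ := by rw [norm_smul]; simp
          _ ≤ _ := by gcongr; exact ctPhi_norm s hs X
      have h2 : ‖q‖ ^ 2 < 1 := by nlinarith [norm_nonneg q]
      have h3 : ‖X‖ ≤ 0 := by nlinarith [norm_nonneg X]
      exact norm_le_zero_iff.mp h3
    rw [← sub_eq_zero]
    apply key
    rw [hwtwt] at e
    by_cases h : r = l
    · rw [if_pos h] at e ⊢
      rw [map_sub, ← hQ1, smul_sub]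
      conv_lhs => rw [e]
      abel
    · rw [if_neg h] at e ⊢
      simpa using e
  · intro i r
    conv_lhs => rw [hw r]
    change star (s i) * _ = _
    rw [mul_add, hswt, zero_add, mul_smul_comm, star_mul_ctPhi]
end

section
/- Let A be a unital C*-algebra, n,m ≥ 1, q ∈ ℂ with |q| < 1, and let v_1,…,v_{n+m} ∈ A satisfy the Cuntz–Toeplitz relations. With Q̃ = Σ_{i=1}^n v_i v_i*, w̃_r = v_{n+r}·((1−Q̃) + (1−|q|²)^{1/2} Q̃), and w_r = Σ_{k≥0} q^k Σ_{μ ∈ {1,…,n}^k} v_μ w̃_r v_μ* (a norm-convergent series), one has (1 − Q̃) w_r = w̃_r for every r = 1,…,m. -/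
open scoped BigOperators

theorem sum_wordProd_succ {A : Type*} [NormedRing A] [StarRing A] {n k : ℕ} (s : Fin n → A) (x : A) :
    ∑ μ : Fin (k + 1) → Fin n, wordProd s μ * x * star (wordProd s μ) =
      ∑ i, s i * (∑ μ : Fin k → Fin n, wordProd s μ * x * star (wordProd s μ)) * star (s i) := by
  rw [← (Fin.consEquiv (fun _ : Fin (k + 1) => Fin n)).sum_comp, Fintype.sum_prod_type]
  refine Finset.sum_congr rfl fun i _ => ?_
  rw [Finset.mul_sum, Finset.sum_mul]
  refine Finset.sum_congr rfl fun μ _ => ?_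
  simp [wordProd, Fin.consEquiv, List.ofFn_succ, mul_assoc]

theorem norm_phi_le {A : Type*} [NormedRing A] [StarRing A] [CStarRing A]
    [NormedAlgebra ℂ A] [StarModule ℂ A] [CompleteSpace A] {n : ℕ} (s : Fin n → A)
    (hs : ∀ i j, star (s i) * s j = if i = j then 1 else 0) (x : A) :
    ‖∑ i, s i * x * star (s i)‖ ≤ ‖x‖ := by
  letI : CStarAlgebra A := {}
  let φ : A →⋆ₙₐ[ℂ] A :=
    { toFun := fun x => ∑ i, s i * x * star (s i)
      map_smul' := fun c x => by simp [Finset.smul_sum]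
      map_zero' := by simp
      map_add' := fun x y => by simp [mul_add, add_mul, Finset.sum_add_distrib]
      map_mul' := fun x y => by
        rw [Finset.sum_mul]
        refine Finset.sum_congr rfl fun i _ => ?_
        rw [Finset.mul_sum, Finset.sum_eq_single i]
        · have h := hs i i
          rw [if_pos rfl] at h
          calc s i * (x * y) * star (s i) = s i * x * 1 * y * star (s i) := by
                simp only [mul_assoc, one_mul]
            _ = _ := by rw [← h]; simp only [mul_assoc]
        · intro j _ hj
          have h := hs i j
          rw [if_neg (Ne.symm hj)] at h
          calc s i * x * star (s i) * (s j * y * star (s j))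
              = s i * x * (star (s i) * s j) * y * star (s j) := by simp only [mul_assoc]
            _ = 0 := by rw [h]; simp
        · simp
      map_star' := fun x => by simp [star_sum, mul_assoc] }
  exact NonUnitalStarAlgHom.norm_apply_le φ x

theorem stmt_8 {A : Type*} [NormedRing A] [StarRing A] [CStarRing A]
    [NormedAlgebra ℂ A] [StarModule ℂ A] [CompleteSpace A]
    {n m : ℕ} (hn : 1 ≤ n) (hm : 1 ≤ m) (q : ℂ) (hq : ‖q‖ < 1)
    (v : Fin (n + m) → A)
    (hct : ∀ i j : Fin (n + m), star (v i) * v j = if i = j then 1 else 0)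
    (Q : A) (hQ : Q = ∑ i : Fin n, v (Fin.castAdd m i) * star (v (Fin.castAdd m i)))
    (wt : Fin m → A)
    (hwt : ∀ r, wt r = v (Fin.natAdd n r) *
      ((1 - Q) + ((Real.sqrt (1 - ‖q‖ ^ 2) : ℝ) : ℂ) • Q))
    (f : Fin m → ℕ → A)
    (hf : ∀ r k, f r k = q ^ k • ∑ μ : Fin k → Fin n,
      wordProd (fun i => v (Fin.castAdd m i)) μ * wt r *
        star (wordProd (fun i => v (Fin.castAdd m i)) μ)) :
    (∀ r : Fin m, Summable (f r)) ∧
    (∀ r : Fin m, (1 - Q) * (∑' k, f r k) = wt r) := by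
  set s : Fin n → A := fun i => v (Fin.castAdd m i) with hsdef
  have hs : ∀ i j, star (s i) * s j = if i = j then 1 else 0 := fun i j => by
    simp [hsdef, hct]
  have hbound : ∀ (x : A) (k : ℕ),
      ‖∑ μ : Fin k → Fin n, wordProd s μ * x * star (wordProd s μ)‖ ≤ ‖x‖ := by
    intro x k
    induction k with
    | zero => simp [wordProd]
    | succ k ih =>
      rw [sum_wordProd_succ]
      exact (norm_phi_le s hs _).trans ih
  have hsum : ∀ r : Fin m, Summable (f r) := by
    intro r
    refine Summable.of_norm_bounded (g := fun k => ‖q‖ ^ k * ‖wt r‖)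
      ((summable_geometric_of_lt_one (norm_nonneg q) hq).mul_right _) fun k => ?_
    rw [hf, norm_smul, norm_pow]
    exact mul_le_mul_of_nonneg_left (hbound _ _) (by positivity)
  refine ⟨hsum, fun r => ?_⟩
  have hQs : ∀ i, (1 - Q) * s i = 0 := by
    intro i
    rw [sub_mul, one_mul, hQ, Finset.sum_mul, Finset.sum_eq_single i]
    · have h := hs i i
      rw [if_pos rfl] at h
      change s i - s i * star (s i) * s i = 0
      rw [mul_assoc, h, mul_one, sub_self]
    · intro j _ hj
      have h := hs j i
      rw [if_neg hj] at h
      change s j * star (s j) * s i = 0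
      rw [mul_assoc, h, mul_zero]
    · simp
  have hQw : (1 - Q) * wt r = wt r := by
    have h : Q * v (Fin.natAdd n r) = 0 := by
      rw [hQ, Finset.sum_mul]
      refine Finset.sum_eq_zero fun i _ => ?_
      have hne : Fin.castAdd m i ≠ Fin.natAdd n r := by
        intro h
        have := congrArg Fin.val h
        simp at this
        omega
      rw [mul_assoc, hct, if_neg hne, mul_zero]
    rw [hwt, ← mul_assoc, sub_mul, h, one_mul, sub_zero]
  rw [← (hsum r).tsum_mul_left, tsum_eq_single 0]
  · rw [hf]
    simp [wordProd, hQw]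
  · intro k hk
    obtain ⟨k, rfl⟩ := Nat.exists_eq_succ_of_ne_zero hk
    rw [hf, Nat.succ_eq_add_one, sum_wordProd_succ, mul_smul_comm, Finset.mul_sum, Finset.sum_eq_zero, smul_zero]
    intro i _
    rw [mul_assoc (s i), ← mul_assoc, hQs, zero_mul]
end

section
/- Let A be a unital C*-algebra and let s, t ∈ A be isometries (s* s = 1 and t* t = 1) such that s* t = q t s* for some q ∈ ℂ with |q| = 1. Then t s = q s t. -/
theorem stmt_10 {A : Type*} [NormedRing A] [StarRing A] [CStarRing A]
    [NormedAlgebra ℂ A] [StarModule ℂ A] [CompleteSpace A]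
    (q : ℂ) (hq : ‖q‖ = 1) (s t : A)
    (hs : star s * s = 1) (ht : star t * t = 1)
    (hst : star s * t = q • (t * star s)) :
    t * s = q • (s * t) := by
  have hqq : q * star q = 1 := by
    have h := Complex.mul_conj q
    rw [Complex.normSq_eq_norm_sq, hq] at h
    simpa using h
  have hqq' : star q * q = 1 := by rw [mul_comm]; exact hqq
  have hts : star t * s = star q • (s * star t) := by
    have h := congrArg star hst
    simpa only [star_mul, star_star, star_smul] using h
  have e1 : star s * star t * (t * s) = 1 := by
    rw [mul_assoc, ← mul_assoc (star t), ht, one_mul, hs]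
  have e2 : star t * star s * (s * t) = 1 := by
    rw [mul_assoc, ← mul_assoc (star s), hs, one_mul, ht]
  have e3 : star s * star t * (s * t) = star q • (1 : A) := by
    rw [mul_assoc, ← mul_assoc (star t), hts, smul_mul_assoc, mul_smul_comm, mul_assoc s, ht,
      mul_one, hs]
  have e4 : star t * star s * (t * s) = q • (1 : A) := by
    rw [mul_assoc, ← mul_assoc (star s), hst, smul_mul_assoc, mul_smul_comm, mul_assoc t, hs,
      mul_one, ht]
  have key : star (t * s - q • (s * t)) * (t * s - q • (s * t)) = 0 := by
    rw [star_sub, star_smul, star_mul, star_mul, sub_mul, mul_sub, mul_sub]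
    simp only [smul_mul_assoc, mul_smul_comm, e1, e2, e3, e4, smul_smul, hqq, hqq', one_smul,
      sub_self]
  exact sub_eq_zero.mp ((CStarRing.star_mul_self_eq_zero_iff _).mp key)
end

section
/- Let A be a unital C*-algebra, n,m ≥ 1, q ∈ ℂ with |q| = 1, and k ∈ ℝ with 0 < k < 1. Suppose s_1,…,s_n, t_1,…,t_m ∈ A satisfy the deformed (quon-type) relations: s_i* s_j = δ_{ij}(1 + k s_j s_i*) for all i,j = 1,…,n; t_r* t_l = δ_{rl}(1 + k t_l t_r*) for all r,l = 1,…,m; and s_j* t_r = q t_r s_j* for all j,r. Then t_r s_j = q s_j t_r for all j = 1,…,n and r = 1,…,m. -/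
theorem stmt_12 {A : Type*} [NormedRing A] [StarRing A] [CStarRing A]
    [NormedAlgebra ℂ A] [StarModule ℂ A] [CompleteSpace A]
    {n m : ℕ} (hn : 1 ≤ n) (hm : 1 ≤ m)
    (q : ℂ) (hq : ‖q‖ = 1) (k : ℝ) (hk0 : 0 < k) (hk1 : k < 1)
    (s : Fin n → A) (t : Fin m → A)
    (hs : ∀ i j : Fin n, star (s i) * s j
      = if i = j then 1 + ((k : ℂ) • (s j * star (s i))) else 0)
    (ht : ∀ r l : Fin m, star (t r) * t l
      = if r = l then 1 + ((k : ℂ) • (t l * star (t r))) else 0)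
    (hst : ∀ (j : Fin n) (r : Fin m), star (s j) * t r = q • (t r * star (s j))) :
    ∀ (j : Fin n) (r : Fin m), t r * s j = q • (s j * t r) := by
  intro j r
  have h1 := hs j j
  have h2 := ht r r
  have h3 := hst j r
  rw [if_pos rfl] at h1 h2
  have h4 : star (t r) * s j = (star q) • (s j * star (t r)) := by
    have := congrArg star h3
    simpa [star_smul] using this
  have hqq : star q * q = 1 := by
    have := Complex.conj_mul' q
    rw [hq] at this
    simpa using this
  generalize s j = x at *
  generalize t r = y at *
  set p := star q with hp
  obtain ⟨B, hB⟩ : ∃ B, B = y * x - q • (x * y) := ⟨_, rfl⟩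
  have e1 : star x * B = (q * k) • (B * star x) := by
    have a1 : star x * (y * x) = q • (y * x * 0 + y * (1 + (k : ℂ) • (x * star x))) := by
      rw [← mul_assoc, h3, smul_mul_assoc, mul_assoc, h1]; simp
    have a2 : star x * (x * y) = y + (k * q : ℂ) • (x * y * star x) := by
      rw [← mul_assoc, h1, add_mul, one_mul, smul_mul_assoc, mul_assoc, h3, mul_smul_comm,
        smul_smul, mul_assoc]
    rw [hB, mul_sub, mul_smul_comm, a1, a2]
    simp only [mul_add, sub_mul, smul_mul_assoc, mul_smul_comm, mul_one, mul_zero, mul_assoc]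
    module
  have e2 : star y * B = (k * p) • (B * star y) := by
    have a1 : star y * (y * x) = x + (k * p : ℂ) • (y * x * star y) := by
      rw [← mul_assoc, h2, add_mul, one_mul, smul_mul_assoc, mul_assoc, h4, mul_smul_comm,
        smul_smul, mul_assoc]
    have a2 : star y * (x * y) = p • (x * (1 + (k : ℂ) • (y * star y))) := by
      rw [← mul_assoc, h4, smul_mul_assoc, mul_assoc, h2]
    rw [hB, mul_sub, mul_smul_comm, a1, a2, smul_smul, mul_comm q p, hqq, one_smul]
    simp only [mul_add, sub_mul, smul_mul_assoc, mul_smul_comm, mul_one, mul_assoc]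
    have : (k * p) • q • (x * (y * star y)) = (k : ℂ) • (x * (y * star y)) := by
      rw [smul_smul, mul_assoc, hqq, mul_one]
    rw [smul_sub, this]
    abel
  have hBs : star B = star x * star y - p • (star y * star x) := by
    rw [hB]; simp [star_smul, hp]
  have e3 : star B * B = ((k : ℂ) ^ 2) • (B * star B) := by
    have c1 : star x * star y * B = ((k : ℂ) ^ 2) • (B * (star x * star y)) := by
      rw [mul_assoc, e2, mul_smul_comm, ← mul_assoc, e1, smul_mul_assoc, smul_smul]
      congr 1
      · linear_combination (k : ℂ) ^ 2 * hqq
      · exact mul_assoc _ _ _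
    have c2 : star y * star x * B = ((k : ℂ) ^ 2) • (B * (star y * star x)) := by
      rw [mul_assoc, e1, mul_smul_comm, ← mul_assoc, e2, smul_mul_assoc, smul_smul]
      congr 1
      · linear_combination (k : ℂ) ^ 2 * hqq
      · exact mul_assoc _ _ _
    rw [hBs, sub_mul, smul_mul_assoc, c1, c2, mul_sub, smul_sub, mul_smul_comm, smul_comm]
  have e4 := congrArg norm e3
  rw [norm_smul, CStarRing.norm_star_mul_self, CStarRing.norm_self_mul_star, norm_pow,
    Complex.norm_real, Real.norm_eq_abs, sq_abs] at e4
  have hk : k ^ 2 < 1 := by nlinarith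
  have h0 : ‖B‖ * ‖B‖ = 0 := by
    have : (1 - k ^ 2) * (‖B‖ * ‖B‖) = 0 := by linarith
    rcases mul_eq_zero.mp this with h | h
    · linarith
    · exact h
  have hB0 : B = 0 := norm_eq_zero.mp (mul_self_eq_zero.mp h0)
  rw [hB0] at hB
  exact sub_eq_zero.mp hB.symm
end

section
/- Let A be a unital C*-algebra, n,m ≥ 1, and let q_{ij} ∈ ℂ with |q_{ij}| = 1 for i = 1,…,n, j = 1,…,m. Suppose s_1,…,s_n ∈ A satisfy s_i* s_i = 1 for all i, and t_1,…,t_m ∈ A satisfy t_j* t_l = δ_{jl}·1 for all j,l together with Σ_{j=1}^m t_j t_j* = 1. Then the following are equivalent: (i) s_i t_j = q_{ij} t_j s_i for all i and j; (ii) s_i* t_j = conj(q_{ij}) t_j s_i* for all i and j. -/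
open scoped BigOperators

theorem stmt_13_aux {A : Type*} [NormedRing A] [StarRing A]
    [NormedAlgebra ℂ A] [StarModule ℂ A] {m : ℕ} (c : Fin m → ℂ) (x : A) (t : Fin m → A)
    (ht : ∀ j l : Fin m, star (t j) * t l = if j = l then 1 else 0)
    (htP : ∑ j : Fin m, t j * star (t j) = 1)
    (h : ∀ j, x * t j = c j • (t j * x)) (j : Fin m) :
    star x * t j = (starRingEnd ℂ) (c j) • (t j * star x) := by
  have h2 : ∀ l, star (t l) * star x = (starRingEnd ℂ) (c l) • (star x * star (t l)) := by
    intro l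
    have := congrArg star (h l)
    simpa [star_smul, star_mul] using this
  calc star x * t j = (∑ l, t l * star (t l)) * (star x * t j) := by rw [htP, one_mul]
    _ = ∑ l, (if l = j then (starRingEnd ℂ) (c l) • (t l * star x) else 0) := by
        rw [Finset.sum_mul]
        refine Finset.sum_congr rfl fun l _ => ?_
        rw [mul_assoc, ← mul_assoc (star (t l)), h2, smul_mul_assoc, mul_assoc, ht]
        split_ifs <;> simp
    _ = _ := by simp

theorem stmt_13 {A : Type*} [NormedRing A] [StarRing A] [CStarRing A]
    [NormedAlgebra ℂ A] [StarModule ℂ A] [CompleteSpace A]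
    {n m : ℕ} (hn : 1 ≤ n) (hm : 1 ≤ m)
    (q : Fin n → Fin m → ℂ) (hq : ∀ i j, ‖q i j‖ = 1)
    (s : Fin n → A) (t : Fin m → A)
    (hs : ∀ i : Fin n, star (s i) * s i = 1)
    (ht : ∀ j l : Fin m, star (t j) * t l = if j = l then 1 else 0)
    (htP : ∑ j : Fin m, t j * star (t j) = 1) :
    (∀ (i : Fin n) (j : Fin m), s i * t j = q i j • (t j * s i)) ↔
    (∀ (i : Fin n) (j : Fin m),
      star (s i) * t j = (starRingEnd ℂ) (q i j) • (t j * star (s i))) := by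
  constructor
  · intro h i j
    exact stmt_13_aux (q i) (s i) t ht htP (h i) j
  · intro h i j
    have := stmt_13_aux (fun j => (starRingEnd ℂ) (q i j)) (star (s i)) t ht htP (h i) j
    simpa using this
end

section
/- Let A be a unital C*-algebra, n,m ≥ 2, Θ = (q_{ij}) with |q_{ij}| = 1, and let s_1,…,s_n, t_1,…,t_m ∈ A satisfy the O_n⊗_Θ O_m relations. Fix k ≥ 1. For μ,ν ∈ {1,…,n}^k define ê_{μν} = s_μ s_ν*, and for i = 1,…,m define t̂_i = Σ_{ρ ∈ {1,…,n}^k} s_ρ t_i s_ρ*. Then: (i) ê_{μν}* = ê_{νμ}, ê_{μν} ê_{ρσ} = δ_{νρ} ê_{μσ}, and Σ_{μ} ê_{μμ} = 1; (ii) t̂_i* t̂_j = δ_{ij}·1 for all i,j and Σ_{i=1}^m t̂_i t̂_i* = 1; (iii) ê_{μν} t̂_i = t̂_i ê_{μν} for all μ,ν and i. -/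
open scoped BigOperators

theorem wordProd_succ_aux {A : Type*} [Monoid A] {n k : ℕ} (s : Fin n → A)
    (a : Fin n) (μ : Fin k → Fin n) :
    wordProd s (Fin.cons a μ : Fin (k + 1) → Fin n) = s a * wordProd s μ := by
  simp [wordProd, List.ofFn_succ]

theorem wordProd_orth_aux {A : Type*} [Ring A] [StarRing A] {n : ℕ} (s : Fin n → A)
    (hs : ∀ i j : Fin n, star (s i) * s j = if i = j then 1 else 0) (k : ℕ) :
    ∀ μ ν : Fin k → Fin n,
      star (wordProd s μ) * wordProd s ν = if μ = ν then 1 else 0 := by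
  induction k with
  | zero =>
    intro μ ν
    rw [if_pos (Subsingleton.elim μ ν)]
    simp [wordProd]
  | succ k ih =>
    intro μ ν
    induction μ using Fin.consCases with
    | _ a μ =>
    induction ν using Fin.consCases with
    | _ b ν =>
    have h : star (s a * wordProd s μ) * (s b * wordProd s ν)
        = star (wordProd s μ) * (star (s a) * s b) * wordProd s ν := by
      simp only [star_mul, mul_assoc]
    rw [wordProd_succ_aux, wordProd_succ_aux, h, hs]
    by_cases hab : a = b
    · subst hab
      simp [ih]
    · simp [hab, Fin.cons_inj]

theorem wordProd_sum_aux {A : Type*} [Ring A] [StarRing A] {n : ℕ} (s : Fin n → A)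
    (hQ : ∑ i : Fin n, s i * star (s i) = 1) (k : ℕ) :
    ∑ μ : Fin k → Fin n, wordProd s μ * star (wordProd s μ) = 1 := by
  induction k with
  | zero => simp [wordProd]
  | succ k ih =>
    rw [← (Fin.consEquiv (fun _ : Fin (k + 1) => Fin n)).sum_comp, Fintype.sum_prod_type]
    have h : ∀ (a : Fin n) (μ : Fin k → Fin n),
        wordProd s ((Fin.consEquiv (fun _ : Fin (k + 1) => Fin n)) (a, μ)) *
          star (wordProd s ((Fin.consEquiv (fun _ : Fin (k + 1) => Fin n)) (a, μ)))
        = s a * (wordProd s μ * star (wordProd s μ)) * star (s a) := by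
      intro a μ
      have : (Fin.consEquiv (fun _ : Fin (k + 1) => Fin n)) (a, μ)
        = (Fin.cons a μ : Fin (k + 1) → Fin n) := rfl
      rw [this, wordProd_succ_aux]
      simp only [star_mul, mul_assoc]
    simp only [h, ← Finset.mul_sum, ← Finset.sum_mul, ih, mul_one, hQ]

theorem stmt_16 {A : Type*} [NormedRing A] [StarRing A] [CStarRing A]
    [NormedAlgebra ℂ A] [StarModule ℂ A] [CompleteSpace A]
    {n m : ℕ} (hn : 2 ≤ n) (hm : 2 ≤ m)
    (Θ : Fin n → Fin m → ℂ) (hΘ : ∀ i j, ‖Θ i j‖ = 1)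
    (s : Fin n → A) (t : Fin m → A)
    (hs : ∀ i j : Fin n, star (s i) * s j = if i = j then 1 else 0)
    (ht : ∀ r l : Fin m, star (t r) * t l = if r = l then 1 else 0)
    (hQ : ∑ i : Fin n, s i * star (s i) = 1)
    (hP : ∑ j : Fin m, t j * star (t j) = 1)
    (hcomm : ∀ (i : Fin n) (j : Fin m), s i * t j = Θ i j • (t j * s i))
    (k : ℕ) (hk : 1 ≤ k)
    (e : (Fin k → Fin n) → (Fin k → Fin n) → A)
    (he : ∀ μ ν, e μ ν = wordProd s μ * star (wordProd s ν))
    (th : Fin m → A)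
    (hth : ∀ i, th i = ∑ ρ : Fin k → Fin n, wordProd s ρ * t i * star (wordProd s ρ)) :
    ((∀ μ ν, star (e μ ν) = e ν μ) ∧
      (∀ μ ν ρ σ, e μ ν * e ρ σ = if ν = ρ then e μ σ else 0) ∧
      (∑ μ : Fin k → Fin n, e μ μ = 1)) ∧
    ((∀ i j : Fin m, star (th i) * th j = if i = j then 1 else 0) ∧
      (∑ i : Fin m, th i * star (th i) = 1)) ∧
    (∀ (μ ν : Fin k → Fin n) (i : Fin m), e μ ν * th i = th i * e μ ν) := by
  have orth := wordProd_orth_aux s hs k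
  have hsum := wordProd_sum_aux s hQ k
  have hR : ∀ (i : Fin m) (σ : Fin k → Fin n), th i * wordProd s σ = wordProd s σ * t i := by
    intro i σ
    rw [hth, Finset.sum_mul]
    simp [mul_assoc, orth]
  have hL : ∀ (i : Fin m) (σ : Fin k → Fin n), star (wordProd s σ) * th i = t i * star (wordProd s σ) := by
    intro i σ
    rw [hth, Finset.mul_sum]
    simp [← mul_assoc, orth]
  have hRs : ∀ (i : Fin m) (σ : Fin k → Fin n), star (th i) * wordProd s σ = wordProd s σ * star (t i) := by
    intro i σ
    have := congrArg star (hL i σ)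
    simpa using this
  refine ⟨⟨?_, ?_, ?_⟩, ⟨?_, ?_⟩, ?_⟩
  · intro μ ν
    simp [he]
  · intro μ ν ρ σ
    have h : e μ ν * e ρ σ
        = wordProd s μ * (star (wordProd s ν) * wordProd s ρ) * star (wordProd s σ) := by
      simp only [he, mul_assoc]
    rw [h, orth]
    by_cases hh : ν = ρ <;> simp [hh, he]
  · simpa [he] using hsum
  · intro i j
    have h : star (th i) * th j = ∑ σ : Fin k → Fin n,
        wordProd s σ * (star (t i) * t j) * star (wordProd s σ) := by
      rw [hth j, Finset.mul_sum]
      refine Finset.sum_congr rfl fun σ _ => ?_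
      rw [← mul_assoc, ← mul_assoc, hRs, mul_assoc (wordProd s σ)]
    rw [h, ht]
    by_cases hh : i = j <;> simp [hh, hsum]
  · have h : ∀ i, th i * star (th i) = ∑ σ : Fin k → Fin n,
        wordProd s σ * (t i * star (t i)) * star (wordProd s σ) := by
      intro i
      have h2 : star (th i) = ∑ σ : Fin k → Fin n,
          wordProd s σ * star (t i) * star (wordProd s σ) := by
        rw [hth i, star_sum]
        simp [mul_assoc]
      rw [h2, Finset.mul_sum]
      refine Finset.sum_congr rfl fun σ _ => ?_
      rw [← mul_assoc, ← mul_assoc, hR, mul_assoc (wordProd s σ)]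
    simp only [h]
    rw [Finset.sum_comm]
    simp only [← Finset.mul_sum, ← Finset.sum_mul, hP, mul_one, hsum]
  · intro μ ν i
    rw [he, mul_assoc, hL, ← mul_assoc, ← mul_assoc, hR]
end

section
/- Let A be a unital C*-algebra, n,m ≥ 2, Θ = (q_{ij}) with |q_{ij}| = 1, and let s_1,…,s_n, t_1,…,t_m ∈ A satisfy the O_n⊗_Θ O_m relations. Fix k,l ≥ 0 and set s_γ = s_1^{2k} s_2 t_1^{2l} t_2 and w = Σ_{δ ∈ {1,…,n}^k, ε ∈ {1,…,m}^l} s_δ t_ε s_γ t_ε* s_δ*. Then: (i) w is an isometry, w* w = 1; (ii) w commutes with every element s_μ t_{μ'} t_{ν'}* s_ν* with μ,ν ∈ {1,…,n}^k and μ',ν' ∈ {1,…,m}^l; (iii) for every word y = s_μ t_{μ'} t_{ν'}* s_ν* with |μ|,|ν| ≤ k and |μ'|,|ν'| ≤ l, one has w* y w = y if |μ| = |ν| and |μ'| = |ν'|, and w* y w = 0 otherwise. -/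
open scoped BigOperators

section Helpers

/-- Product along a list word. -/
def lw {A : Type*} [Monoid A] {n : ℕ} (s : Fin n → A) (L : List (Fin n)) : A := (L.map s).prod

theorem wordProd_eq_lw {A : Type*} [Monoid A] {n k : ℕ} (s : Fin n → A) (μ : Fin k → Fin n) :
    wordProd s μ = lw s (List.ofFn μ) := by
  simp [wordProd, lw, List.map_ofFn, Function.comp_def]

theorem lw_append {A : Type*} [Monoid A] {n : ℕ} (s : Fin n → A) (L M : List (Fin n)) :
    lw s (L ++ M) = lw s L * lw s M := by
  simp [lw]

theorem exists_ofFn {α : Type*} {k : ℕ} (L : List α) (h : L.length = k) :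
    ∃ δ : Fin k → α, List.ofFn δ = L := by
  subst h
  exact ⟨L.get, List.ofFn_get L⟩

theorem lw_star_mul {A : Type*} [Ring A] [StarRing A] {n : ℕ} (s : Fin n → A)
    (hs : ∀ i j : Fin n, star (s i) * s j = if i = j then 1 else 0) (a b : List (Fin n))
    (h : a.length ≤ b.length) :
    star (lw s a) * lw s b = if a <+: b then lw s (b.drop a.length) else 0 := by
  induction a generalizing b with
  | nil => simp [lw]
  | cons x a ih =>
    cases b with
    | nil => simp at h
    | cons y b =>
      have h' : a.length ≤ b.length := by simpa using h
      have e : star (lw s (x :: a)) * lw s (y :: b)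
          = star (lw s a) * (star (s x) * s y) * lw s b := by
        simp [lw, mul_assoc]
      rw [e, hs]
      by_cases hxy : x = y
      · subst hxy
        simp [ih b h', List.cons_prefix_cons]
      · simp [hxy, List.cons_prefix_cons]

theorem lw_orth {A : Type*} [Ring A] [StarRing A] {n k : ℕ} (s : Fin n → A)
    (hs : ∀ i j : Fin n, star (s i) * s j = if i = j then 1 else 0) (a b : Fin k → Fin n) :
    star (wordProd s a) * wordProd s b = if a = b then 1 else 0 := by
  rw [wordProd_eq_lw, wordProd_eq_lw, lw_star_mul s hs _ _ (by simp)]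
  by_cases h : a = b
  · subst h; rw [if_pos (List.prefix_refl _), List.drop_length]; simp [lw]
  · have : ¬ (List.ofFn a <+: List.ofFn b) := by
      intro h'
      exact h (List.ofFn_injective (h'.eq_of_length (by simp)))
    simp [h, this]

theorem lw_isom {A : Type*} [Ring A] [StarRing A] {n : ℕ} (s : Fin n → A)
    (hs : ∀ i j : Fin n, star (s i) * s j = if i = j then 1 else 0) (a : List (Fin n)) :
    star (lw s a) * lw s a = 1 := by
  rw [lw_star_mul s hs _ _ le_rfl]; simp [lw]

theorem lw_sum {A : Type*} [Ring A] [StarRing A] {n : ℕ} (s : Fin n → A)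
    (hQ : ∑ i : Fin n, s i * star (s i) = 1) (k : ℕ) :
    ∑ a : Fin k → Fin n, wordProd s a * star (wordProd s a) = 1 := by
  induction k with
  | zero => simp [wordProd]
  | succ k ih =>
    rw [← (Fin.consEquiv (fun _ => Fin n)).sum_comp, Fintype.sum_prod_type]
    have : ∀ x : Fin n, ∑ y : Fin k → Fin n,
        wordProd s ((Fin.consEquiv (fun _ => Fin n)) (x, y)) *
          star (wordProd s ((Fin.consEquiv (fun _ => Fin n)) (x, y))) = s x * star (s x) := by
      intro x
      have e : ∀ y : Fin k → Fin n,
        wordProd s ((Fin.consEquiv (fun _ => Fin n)) (x, y)) *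
          star (wordProd s ((Fin.consEquiv (fun _ => Fin n)) (x, y)))
          = s x * (wordProd s y * star (wordProd s y)) * star (s x) := by
        intro y
        simp [wordProd, Fin.consEquiv, List.ofFn_succ, mul_assoc]
      rw [Finset.sum_congr rfl (fun y _ => e y), ← Finset.sum_mul, ← Finset.mul_sum, ih, mul_one]
    rw [Finset.sum_congr rfl (fun x _ => this x), hQ]

/-- The combinatorial core, one-sided version. -/
theorem core_aux {A : Type*} [Ring A] [StarRing A] {n : ℕ} (s : Fin n → A)
    (hs : ∀ i j : Fin n, star (s i) * s j = if i = j then 1 else 0) (k : ℕ)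
    (x y : Fin n) (hxy : x ≠ y) (d d' μ ν : List (Fin n)) (hd : d.length = k) (hd' : d'.length = k)
    (hμ : μ.length ≤ k) (hν : ν.length ≤ k) (hlt : μ.length < ν.length) :
    star (lw s (d ++ (List.replicate (2 * k) x ++ [y]))) * lw s μ * star (lw s ν) *
      lw s (d' ++ (List.replicate (2 * k) x ++ [y])) = 0 := by
  set p := d ++ (List.replicate (2 * k) x ++ [y]) with hp
  set p' := d' ++ (List.replicate (2 * k) x ++ [y]) with hp'
  have lp : p.length = 3 * k + 1 := by simp [hp, hd]; omega
  have lp' : p'.length = 3 * k + 1 := by simp [hp', hd']; omega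
  have e1 : star (lw s p) * lw s μ = star (star (lw s μ) * lw s p) := by simp
  rw [mul_assoc, e1, lw_star_mul s hs ν p' (by omega), lw_star_mul s hs μ p (by omega)]
  split_ifs with h1 h2
  · have e2 : star (lw s (p.drop μ.length)) * lw s (p'.drop ν.length)
        = star (star (lw s (p'.drop ν.length)) * lw s (p.drop μ.length)) := by simp
    rw [e2, lw_star_mul s hs _ _ (by simp; omega), if_neg, star_zero]
    intro hpre
    have hl : 3 * k - ν.length < (p'.drop ν.length).length := by simp; omega
    have := hpre.getElem hl
    rw [List.getElem_drop, List.getElem_drop] at this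
    apply hxy
    have a1 : p'[ν.length + (3 * k - ν.length)]'(by omega) = y := by
      have : ν.length + (3 * k - ν.length) = 3 * k := by omega
      simp only [this, hp']
      rw [List.getElem_append_right (by omega), List.getElem_append_right (by simp; omega)]
      simp
    have a2 : p[μ.length + (3 * k - ν.length)]'(by omega) = x := by
      simp only [hp]
      rw [List.getElem_append_right (by omega), List.getElem_append_left (by simp; omega)]
      simp
    rw [a1, a2] at this
    exact this.symm
  all_goals simp

theorem core {A : Type*} [Ring A] [StarRing A] {n : ℕ} (s : Fin n → A)
    (hs : ∀ i j : Fin n, star (s i) * s j = if i = j then 1 else 0) (k : ℕ)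
    (x y : Fin n) (hxy : x ≠ y) (d d' μ ν : List (Fin n)) (hd : d.length = k) (hd' : d'.length = k)
    (hμ : μ.length ≤ k) (hν : ν.length ≤ k) (hne : μ.length ≠ ν.length) :
    star (lw s (d ++ (List.replicate (2 * k) x ++ [y]))) * lw s μ * star (lw s ν) *
      lw s (d' ++ (List.replicate (2 * k) x ++ [y])) = 0 := by
  rcases lt_or_gt_of_ne hne with h | h
  · exact core_aux s hs k x y hxy d d' μ ν hd hd' hμ hν h
  · have := core_aux s hs k x y hxy d' d ν μ hd' hd hν hμ h
    rw [← star_eq_zero] at this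
    simpa [mul_assoc] using this

/-- Commutation up to a scalar. -/
def QC {A : Type*} [Ring A] [Algebra ℂ A] (x y : A) : Prop :=
  ∃ c : ℂ, c ≠ 0 ∧ x * y = c • (y * x)

section QC
variable {A : Type*} [Ring A] [Algebra ℂ A]

theorem QC.symm {x y : A} (h : QC x y) : QC y x := by
  obtain ⟨c, h0, hc⟩ := h
  exact ⟨c⁻¹, inv_ne_zero h0, by rw [hc, smul_smul, inv_mul_cancel₀ h0, one_smul]⟩
theorem QC.one_left (y : A) : QC 1 y := ⟨1, one_ne_zero, by simp⟩
theorem QC.mul_left {x x' y : A} (h : QC x y) (h' : QC x' y) : QC (x * x') y := by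
  obtain ⟨c, h0, hc⟩ := h
  obtain ⟨c', h0', hc'⟩ := h'
  refine ⟨c' * c, mul_ne_zero h0' h0, ?_⟩
  rw [mul_assoc, hc', mul_smul_comm, ← mul_assoc, hc, smul_mul_assoc, smul_smul, mul_assoc]
theorem QC.mul_right {x y y' : A} (h : QC x y) (h' : QC x y') : QC x (y * y') :=
  (h.symm.mul_left h'.symm).symm
theorem QC.lw_left {n : ℕ} (s : Fin n → A) (y : A) (h : ∀ i, QC (s i) y) (L : List (Fin n)) :
    QC (lw s L) y := by
  induction L with
  | nil => simpa [lw] using QC.one_left y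
  | cons a L ih => simpa [lw] using (h a).mul_left ih
theorem QC.star [StarRing A] [StarModule ℂ A] {x y : A} (h : QC x y) :
    QC (Star.star x) (Star.star y) := by
  obtain ⟨c, h0, hc⟩ := h
  refine QC.symm ⟨Star.star c, star_ne_zero.mpr h0, ?_⟩
  rw [← star_mul, hc, star_smul, star_mul]
end QC

theorem abs_w {A ι : Type*} [Ring A] [StarRing A] [Fintype ι] [DecidableEq ι] (u : ι → A) (g : A)
    (ho : ∀ i j, star (u i) * u j = if i = j then 1 else 0)
    (w : A) (hw : w = ∑ i, u i * g * star (u i)) (i : ι) :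
    w * u i = u i * g ∧ star (u i) * w = g * star (u i) := by
  constructor
  · rw [hw, Finset.sum_mul]
    simp_rw [mul_assoc, ho]
    simp
  · rw [hw, Finset.mul_sum]
    simp_rw [← mul_assoc, ho]
    simp

end Helpers

theorem stmt_17 {A : Type*} [NormedRing A] [StarRing A] [CStarRing A]
    [NormedAlgebra ℂ A] [StarModule ℂ A] [CompleteSpace A]
    {n m : ℕ} (hn : 2 ≤ n) (hm : 2 ≤ m)
    (Θ : Fin n → Fin m → ℂ) (hΘ : ∀ i j, ‖Θ i j‖ = 1)
    (s : Fin n → A) (t : Fin m → A)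
    (hs : ∀ i j : Fin n, star (s i) * s j = if i = j then 1 else 0)
    (ht : ∀ r l : Fin m, star (t r) * t l = if r = l then 1 else 0)
    (hQ : ∑ i : Fin n, s i * star (s i) = 1)
    (hP : ∑ j : Fin m, t j * star (t j) = 1)
    (hcomm : ∀ (i : Fin n) (j : Fin m), s i * t j = Θ i j • (t j * s i))
    (k l : ℕ)
    (sγ : A)
    (hγ : sγ = (s ⟨0, by omega⟩) ^ (2 * k) * s ⟨1, by omega⟩ *
      (t ⟨0, by omega⟩) ^ (2 * l) * t ⟨1, by omega⟩)
    (w : A)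
    (hw : w = ∑ δ : Fin k → Fin n, ∑ ε : Fin l → Fin m,
      wordProd s δ * wordProd t ε * sγ * star (wordProd t ε) * star (wordProd s δ)) :
    (star w * w = 1) ∧
    (∀ (μ ν : Fin k → Fin n) (μ' ν' : Fin l → Fin m),
      w * (wordProd s μ * wordProd t μ' * star (wordProd t ν') * star (wordProd s ν))
        = (wordProd s μ * wordProd t μ' * star (wordProd t ν') * star (wordProd s ν)) * w) ∧
    (∀ (k₁ k₂ l₁ l₂ : ℕ), k₁ ≤ k → k₂ ≤ k → l₁ ≤ l → l₂ ≤ l →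
      ∀ (μ : Fin k₁ → Fin n) (ν : Fin k₂ → Fin n) (μ' : Fin l₁ → Fin m) (ν' : Fin l₂ → Fin m),
        ((k₁ = k₂ ∧ l₁ = l₂) →
          star w * (wordProd s μ * wordProd t μ' * star (wordProd t ν') * star (wordProd s ν)) * w
            = wordProd s μ * wordProd t μ' * star (wordProd t ν') * star (wordProd s ν)) ∧
        (¬(k₁ = k₂ ∧ l₁ = l₂) →
          star w * (wordProd s μ * wordProd t μ' * star (wordProd t ν') * star (wordProd s ν)) * w
            = 0)) := by
  classical
  have hΘ' : ∀ i j, star (Θ i j) * Θ i j = 1 := by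
    intro i j
    have := Complex.conj_mul' (Θ i j)
    rw [hΘ] at this
    simpa using this
  have hcomm' : ∀ (i : Fin n) (j : Fin m), t j * s i = star (Θ i j) • (s i * t j) := by
    intro i j
    rw [hcomm, smul_smul, hΘ', one_smul]
  have hΘ0 : ∀ i j, Θ i j ≠ 0 := by
    intro i j h
    have := hΘ i j
    simp [h] at this
  have q1 : ∀ i j, QC (s i) (t j) := fun i j => ⟨_, hΘ0 i j, hcomm i j⟩
  have q3 : ∀ i j, QC (star (s i)) (t j) := by
    intro i j
    refine ⟨star (Θ i j), star_ne_zero.mpr (hΘ0 i j), ?_⟩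
    calc star (s i) * t j = star (s i) * t j * ∑ x, s x * star (s x) := by rw [hQ, mul_one]
      _ = ∑ x, star (Θ x j) • ((star (s i) * s x) * t j * star (s x)) := by
        rw [Finset.mul_sum]
        refine Finset.sum_congr rfl fun x _ => ?_
        have : star (s i) * t j * (s x * star (s x)) = star (s i) * (t j * s x) * star (s x) := by
          simp only [mul_assoc]
        rw [this, hcomm']
        simp only [mul_smul_comm, smul_mul_assoc, mul_assoc]
      _ = _ := by
        simp_rw [hs]
        rw [Finset.sum_eq_single i]
        · simp
        · intro b _ hb
          simp [Ne.symm hb]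
        · simp
  have Q1 : ∀ a b, QC (lw s a) (lw t b) := fun a b =>
    QC.lw_left _ _ (fun i => (QC.lw_left _ _ (fun j => (q1 i j).symm) b).symm) a
  have Q2 : ∀ a b, QC (lw s a) (star (lw t b)) := fun a b =>
    QC.lw_left _ _ (fun i => by
      simpa using (QC.lw_left _ _ (fun j => (q3 i j).symm) b).symm.star) a
  have Q3 : ∀ a b, QC (star (lw s a)) (lw t b) := fun a b => by simpa using (Q2 a b).star
  have Q4 : ∀ a b, QC (star (lw s a)) (star (lw t b)) := fun a b => (Q1 a b).star
  set x0 : Fin n := ⟨0, by omega⟩ with hx0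
  set x1 : Fin n := ⟨1, by omega⟩ with hx1
  set y0 : Fin m := ⟨0, by omega⟩ with hy0
  set y1 : Fin m := ⟨1, by omega⟩ with hy1
  have hx : x0 ≠ x1 := by simp [hx0, hx1]
  have hy : y0 ≠ y1 := by simp [hy0, hy1]
  set LS : List (Fin n) := List.replicate (2 * k) x0 ++ [x1] with hLS
  set LT : List (Fin m) := List.replicate (2 * l) y0 ++ [y1] with hLT
  have hγ' : sγ = lw s LS * lw t LT := by
    rw [hγ]; simp [hLS, hLT, lw, mul_assoc]
  have hγi : star sγ * sγ = 1 := by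
    have : star sγ * sγ = star (lw t LT) * (star (lw s LS) * lw s LS) * lw t LT := by
      rw [hγ']; simp [mul_assoc]
    rw [this, lw_isom s hs, mul_one, lw_isom t ht]
  let u : (Fin k → Fin n) × (Fin l → Fin m) → A := fun p => wordProd s p.1 * wordProd t p.2
  have hu : ∀ p, u p = wordProd s p.1 * wordProd t p.2 := fun _ => rfl
  have ho : ∀ i j, star (u i) * u j = if i = j then 1 else 0 := by
    rintro ⟨d, e⟩ ⟨d', e'⟩
    have : star (u (d, e)) * u (d', e')
        = star (wordProd t e) * (star (wordProd s d) * wordProd s d') * wordProd t e' := by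
      simp [hu, mul_assoc]
    rw [this, lw_orth s hs]
    by_cases h : d = d'
    · simp [h, lw_orth t ht]
    · simp [h]
  have hsum : ∀ k l : ℕ, ∑ d : Fin k → Fin n, ∑ e : Fin l → Fin m,
      wordProd s d * wordProd t e * star (wordProd t e) * star (wordProd s d) = 1 := by
    intro k l
    rw [← lw_sum s hQ k]
    refine Finset.sum_congr rfl fun d _ => ?_
    rw [← Finset.sum_mul]
    simp_rw [mul_assoc (wordProd s d)]
    rw [← Finset.mul_sum, lw_sum t hP, mul_one]
  have hu1 : ∑ i, u i * star (u i) = 1 := by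
    rw [Fintype.sum_prod_type, ← hsum k l]
    simp [hu, mul_assoc]
  have hw' : w = ∑ i, u i * sγ * star (u i) := by
    rw [hw, Fintype.sum_prod_type]
    simp [hu, mul_assoc]
  have hwu : ∀ i, w * u i = u i * sγ := fun i => (abs_w u sγ ho w hw' i).1
  have huw : ∀ i, star (u i) * w = sγ * star (u i) := fun i => (abs_w u sγ ho w hw' i).2
  have hwu' : ∀ i, star (u i) * star w = star sγ * star (u i) := fun i => by
    rw [← star_mul, hwu, star_mul]
  have hiso : star w * w = 1 := by
    calc star w * w = ∑ i, star w * (w * u i) * star (u i) := by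
          rw [← mul_one (star w * w), ← hu1, Finset.mul_sum]
          simp only [mul_assoc]
      _ = ∑ i, star (star (u i) * w) * sγ * star (u i) := by
          simp only [hwu, star_mul, star_star, mul_assoc]
      _ = ∑ i, u i * (star sγ * sγ) * star (u i) := by
          simp only [huw, star_mul, star_star, mul_assoc]
      _ = 1 := by simp only [hγi, mul_one, hu1]
  have hii : ∀ i j, w * (u i * star (u j)) = (u i * star (u j)) * w := by
    intro i j
    rw [← mul_assoc, hwu, mul_assoc (u i), mul_assoc (u i), huw]
  have hii' : ∀ (μ ν : Fin k → Fin n) (μ' ν' : Fin l → Fin m),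
      w * (wordProd s μ * wordProd t μ' * star (wordProd t ν') * star (wordProd s ν))
        = (wordProd s μ * wordProd t μ' * star (wordProd t ν') * star (wordProd s ν)) * w := by
    intro μ ν μ' ν'
    simpa [hu, mul_assoc] using hii (μ, μ') (ν, ν')
  have hL : ∀ (μ ν : List (Fin n)) (μ' ν' : List (Fin m)), μ.length = k → ν.length = k →
      μ'.length = l → ν'.length = l →
      Commute w (lw s μ * lw t μ' * star (lw t ν') * star (lw s ν)) := by
    intro μ ν μ' ν' h1 h2 h3 h4
    obtain ⟨a, rfl⟩ := exists_ofFn μ h1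
    obtain ⟨b, rfl⟩ := exists_ofFn ν h2
    obtain ⟨c, rfl⟩ := exists_ofFn μ' h3
    obtain ⟨d, rfl⟩ := exists_ofFn ν' h4
    simp only [← wordProd_eq_lw]
    exact hii' a b c d
  refine ⟨hiso, hii', ?_⟩
  intro k₁ k₂ l₁ l₂ hk₁ hk₂ hl₁ hl₂ μ ν μ' ν'
  constructor
  · rintro ⟨rfl, rfl⟩
    suffices hc : Commute w
        (wordProd s μ * wordProd t μ' * star (wordProd t ν') * star (wordProd s ν)) by
      rw [mul_assoc, ← hc.eq, ← mul_assoc, hiso, one_mul]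
    have e : wordProd s μ * wordProd t μ' * star (wordProd t ν') * star (wordProd s ν)
        = ∑ d : Fin (k - k₁) → Fin n, ∑ e : Fin (l - l₁) → Fin m,
          wordProd s μ * wordProd t μ' *
          (wordProd s d * wordProd t e * star (wordProd t e) * star (wordProd s d)) *
          (star (wordProd t ν') * star (wordProd s ν)) := by
      simp_rw [← Finset.sum_mul, ← Finset.mul_sum, hsum]
      simp only [mul_one, mul_assoc]
    rw [e]
    refine Commute.sum_right _ _ _ fun d _ => Commute.sum_right _ _ _ fun e _ => ?_
    simp only [wordProd_eq_lw]
    set M := List.ofFn μ with hM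
    set M' := List.ofFn μ' with hM'
    set N := List.ofFn ν with hN
    set N' := List.ofFn ν' with hN'
    set D := List.ofFn d with hD
    set E := List.ofFn e with hE
    obtain ⟨c, -, hc⟩ := (Q1 D M').symm
    obtain ⟨c', -, hc'⟩ := Q4 D N'
    have : lw s M * lw t M' * (lw s D * lw t E * star (lw t E) * star (lw s D)) *
          (star (lw t N') * star (lw s N))
        = (c * c') • (lw s (M ++ D) * lw t (M' ++ E) * star (lw t (N' ++ E)) *
          star (lw s (N ++ D))) := by
      calc _ = lw s M * (lw t M' * lw s D) * lw t E * star (lw t E) *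
              (star (lw s D) * star (lw t N')) * star (lw s N) := by
            simp only [mul_assoc]
        _ = _ := by
            rw [hc, hc']
            simp only [mul_smul_comm, smul_mul_assoc, smul_smul, lw_append, star_mul, mul_assoc]
            rw [mul_comm c' c]
    rw [this]
    exact (hL _ _ _ _ (by simp [hM, hD]; omega) (by simp [hN, hD]; omega)
      (by simp [hM', hE]; omega) (by simp [hN', hE]; omega)).smul_right _
  · intro hne
    set y := wordProd s μ * wordProd t μ' * star (wordProd t ν') * star (wordProd s ν) with hy'
    have key : ∀ i j, star sγ * star (u i) * y * (u j * sγ) = 0 := by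
      rintro ⟨d, e⟩ ⟨d', e'⟩
      simp only [hu, hy', wordProd_eq_lw, hγ']
      set M := List.ofFn μ with hM
      set M' := List.ofFn μ' with hM'
      set N := List.ofFn ν with hN
      set N' := List.ofFn ν' with hN'
      set D := List.ofFn d with hD
      set E := List.ofFn e with hE
      set D' := List.ofFn d' with hD'
      set E' := List.ofFn e' with hE'
      obtain ⟨c, -, hc⟩ := Q4 LS E
      obtain ⟨c', -, hc'⟩ := (Q1 LS E').symm
      have : star (lw s LS * lw t LT) * star (lw s D * lw t E) *
          (lw s M * lw t M' * star (lw t N') * star (lw s N)) *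
          (lw s D' * lw t E' * (lw s LS * lw t LT))
          = (c * c') • (star (lw t (E ++ LT)) * ((star (lw s (D ++ LS)) * lw s M) *
            (lw t M' * star (lw t N')) * (star (lw s N) * lw s (D' ++ LS))) *
              lw t (E' ++ LT)) := by
        calc _ = star (lw t LT) * (star (lw s LS) * star (lw t E)) * star (lw s D) *
              (lw s M * lw t M' * star (lw t N') * star (lw s N)) *
              lw s D' * (lw t E' * lw s LS) * lw t LT := by
              simp only [star_mul, mul_assoc]
          _ = _ := by
            rw [hc, hc']
            simp only [mul_smul_comm, smul_mul_assoc, smul_smul, lw_append, star_mul, mul_assoc]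
            try rw [mul_comm c' c]
      rw [this]
      by_cases hk : k₁ = k₂
      · have hl : l₁ ≠ l₂ := fun h => hne ⟨hk, h⟩
        have z := core t ht l y0 y1 hy E E' M' N' (by simp [hE]) (by simp [hE'])
          (by simpa [hM'] using hl₁) (by simpa [hN'] using hl₂) (by simpa [hM', hN'] using hl)
        rw [← hLT] at z
        obtain ⟨a, -, ha⟩ : QC (star (lw s (D ++ LS)) * lw s M) (lw t M' * star (lw t N')) :=
          ((Q3 _ _).mul_right (Q4 _ _)).mul_left ((Q1 _ _).mul_right (Q2 _ _))
        obtain ⟨b, -, hb⟩ : QC ((star (lw s (D ++ LS)) * lw s M) *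
            (star (lw s N) * lw s (D' ++ LS))) (lw t (E' ++ LT)) :=
          ((Q3 _ _).mul_left (Q1 _ _)).mul_left ((Q3 _ _).mul_left (Q1 _ _))
        rw [ha, smul_mul_assoc, mul_assoc (lw t M' * _), mul_smul_comm, smul_mul_assoc,
          mul_assoc, mul_assoc (lw t M' * _), hb, mul_smul_comm, mul_smul_comm,
          ← mul_assoc, ← mul_assoc, ← mul_assoc (star (lw t (E ++ LT))), z]
        simp
      · have z := core s hs k x0 x1 hx D D' M N (by simp [hD]) (by simp [hD'])
          (by simpa [hM] using hk₁) (by simpa [hN] using hk₂) (by simpa [hM, hN] using hk)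
        rw [← hLS, mul_assoc (_ * _)] at z
        obtain ⟨a, -, ha⟩ : QC (lw t M' * star (lw t N')) (star (lw s N) * lw s (D' ++ LS)) :=
          QC.symm <| ((Q3 _ _).mul_right (Q4 _ _)).mul_left ((Q1 _ _).mul_right (Q2 _ _))
        rw [mul_assoc (star (lw s (D ++ LS)) * lw s M), ha, mul_smul_comm,
          ← mul_assoc (star (lw s (D ++ LS)) * lw s M), z]
        simp
    have e1 : star w = ∑ i, u i * (star sγ * star (u i)) := by
      rw [hw', star_sum]; simp [mul_assoc]
    have e2 : w = ∑ i, (u i * sγ) * star (u i) := hw'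
    rw [e1]
    nth_rewrite 1 [e2]
    rw [Finset.sum_mul, Finset.sum_mul]
    refine Finset.sum_eq_zero fun i _ => ?_
    rw [Finset.mul_sum]
    refine Finset.sum_eq_zero fun j _ => ?_
    have : u i * (star sγ * star (u i)) * y * (u j * sγ * star (u j))
        = u i * (star sγ * star (u i) * y * (u j * sγ)) * star (u j) := by
      simp only [mul_assoc]
    rw [this, key]
    simp
end

section
/- Let n,m ≥ 1 and q ∈ ℂ with |q| = 1. Let H = ℓ²(List(Fin n) × List(Fin m); ℂ) with standard orthonormal basis (e_{(μ,ν)}) indexed by pairs of words, and let Ω = e_{([],[])}. There exist bounded operators S_1,…,S_n and T_1,…,T_m on H determined by S_j e_{(μ,ν)} = e_{(j::μ, ν)} and T_r e_{(μ,ν)} = q^{|μ|} e_{(μ, r::ν)} (where |μ| is the length of μ and j::μ denotes prepending j), and they satisfy: each S_j and each T_r is an isometry; S_i* S_j = 0 for i ≠ j; T_r* T_l = 0 for r ≠ l; S_j* T_r = q T_r S_j* and T_r S_j = q S_j T_r for all j,r; and S_j* Ω = 0 and T_r* Ω = 0 for all j,r. (Thus the operators S_j, T_r realize the Fock representation of the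 relations E_{n,m}^q with vacuum vector Ω.) -/
noncomputable section

/-- Index set of the Fock space: pairs of words in the alphabets `{1,…,n}` and `{1,…,m}`. -/
abbrev FockIdx (n m : ℕ) := List (Fin n) × List (Fin m)

/-- The Fock space `ℓ²(List (Fin n) × List (Fin m); ℂ)`. -/
abbrev Fock (n m : ℕ) := lp (fun _ : FockIdx n m => ℂ) 2

theorem fock_ext_basis {ι : Type*} [DecidableEq ι]
    {A B : lp (fun _ : ι => ℂ) 2 →L[ℂ] lp (fun _ : ι => ℂ) 2}
    (h : ∀ i, A (lp.single 2 i 1) = B (lp.single 2 i 1)) : A = B := by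
  ext1 f
  have hf := lp.hasSum_single (E := fun _ : ι => ℂ) (p := 2) (by norm_num) f
  have h1 := hf.mapL A
  have h2 := hf.mapL B
  have key : ∀ i, A (lp.single 2 i (f i)) = B (lp.single 2 i (f i)) := by
    intro i
    have : (lp.single 2 i (f i) : lp (fun _ : ι => ℂ) 2) = f i • lp.single 2 i 1 := by
      rw [← lp.single_smul]; simp
    rw [this, map_smul, map_smul, h]
  simp only [key] at h1
  exact h1.unique h2

/-- weighted shift along an injective map. -/
theorem wshift_exists {ι : Type*} [DecidableEq ι] (g : ι → ι) (hg : Function.Injective g)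
    (c : ι → ℂ) (hc : ∀ i, ‖c i‖ = 1) :
    ∃ V : lp (fun _ : ι => ℂ) 2 →L[ℂ] lp (fun _ : ι => ℂ) 2,
      (∀ i, V (lp.single 2 i 1) = c i • lp.single 2 (g i) 1) ∧
      (∀ i, star V (lp.single 2 (g i) 1) = star (c i) • lp.single 2 i 1) ∧
      (∀ k, (∀ i, g i ≠ k) → star V (lp.single 2 k 1) = 0) := by
  have hv : Orthonormal ℂ
      (fun i => (c i • lp.single 2 (g i) 1 : lp (fun _ : ι => ℂ) 2)) := by
    rw [orthonormal_iff_ite]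
    intro i j
    rw [inner_smul_left, inner_smul_right, lp.inner_single_left]
    by_cases hij : i = j
    · subst hij
      have := Complex.conj_mul' (c i)
      simp [hc] at this
      simp [lp.single_apply, this]
    · have : g i ≠ g j := fun h => hij (hg h)
      simp [lp.single_apply, hij, this]
  let V := hv.orthogonalFamily.linearIsometry.toContinuousLinearMap
  have hV : ∀ i, V (lp.single 2 i 1) = c i • lp.single 2 (g i) 1 := by
    intro i
    have := hv.orthogonalFamily.linearIsometry_apply_single (i := i) (1 : ℂ)
    simpa [V] using this
  have hco : ∀ k i, (star V (lp.single 2 k 1) : lp (fun _ : ι => ℂ) 2) i =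
      star (c i) * (if g i = k then 1 else 0) := by
    intro k i
    have h1 := lp.inner_single_left (𝕜 := ℂ) (G := fun _ : ι => ℂ) i 1 (star V (lp.single 2 k 1))
    rw [ContinuousLinearMap.star_eq_adjoint, ContinuousLinearMap.adjoint_inner_right, hV,
      inner_smul_left, lp.inner_single_left] at h1
    rw [ContinuousLinearMap.star_eq_adjoint]
    simp [lp.single_apply, Pi.single_apply] at h1 ⊢
    exact h1.symm
  refine ⟨V, hV, ?_, ?_⟩
  · intro i
    ext k
    rw [hco]
    by_cases h : k = i
    · subst h; simp
    · simp [h, hg.eq_iff, lp.single_apply]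
  · intro k hk
    ext i
    rw [hco]
    simp [hk]

theorem stmt_19 (n m : ℕ) (hn : 1 ≤ n) (hm : 1 ≤ m) (q : ℂ) (hq : ‖q‖ = 1) :
    ∃ (S : Fin n → Fock n m →L[ℂ] Fock n m) (T : Fin m → Fock n m →L[ℂ] Fock n m),
      (∀ (j : Fin n) (p : FockIdx n m),
        S j (lp.single 2 p 1) = lp.single 2 (j :: p.1, p.2) 1) ∧
      (∀ (r : Fin m) (p : FockIdx n m),
        T r (lp.single 2 p 1) = q ^ p.1.length • lp.single 2 (p.1, r :: p.2) 1) ∧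
      (∀ j, star (S j) * S j = 1) ∧
      (∀ r, star (T r) * T r = 1) ∧
      (∀ i j, i ≠ j → star (S i) * S j = 0) ∧
      (∀ r l, r ≠ l → star (T r) * T l = 0) ∧
      (∀ (j : Fin n) (r : Fin m), star (S j) * T r = q • (T r * star (S j))) ∧
      (∀ (j : Fin n) (r : Fin m), T r * S j = q • (S j * T r)) ∧
      (∀ j, star (S j) (lp.single 2 (([], []) : FockIdx n m) 1) = 0) ∧
      (∀ r, star (T r) (lp.single 2 (([], []) : FockIdx n m) 1) = 0) := by
  have hS := fun j : Fin n => wshift_exists (ι := FockIdx n m) (fun p => (j :: p.1, p.2))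
    (by rintro ⟨a, b⟩ ⟨a', b'⟩ h; simpa using h) (fun _ => 1) (by simp)
  have hT := fun r : Fin m => wshift_exists (ι := FockIdx n m) (fun p => (p.1, r :: p.2))
    (by rintro ⟨a, b⟩ ⟨a', b'⟩ h; simpa using h) (fun p => q ^ p.1.length) (by simp [hq])
  choose S hS1 hS2 hS3 using hS
  choose T hT1 hT2 hT3 using hT
  have hqq : ∀ k : ℕ, q ^ k * star (q ^ k) = 1 := by
    intro k
    have := Complex.mul_conj' (q ^ k)
    simpa [hq] using this
  simp only [one_smul, star_one] at hS1 hS2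
  have hS2' : ∀ j a b, star (S j) (lp.single 2 ((j :: a, b) : FockIdx n m) 1)
      = lp.single 2 (a, b) 1 := fun j a b => hS2 j (a, b)
  have hT2' : ∀ r a b, star (T r) (lp.single 2 ((a, r :: b) : FockIdx n m) 1)
      = star (q ^ a.length) • lp.single 2 (a, b) 1 := fun j a b => hT2 j (a, b)
  refine ⟨S, T, hS1, hT1, ?_, ?_, ?_, ?_, ?_, ?_, ?_, ?_⟩
  · intro j
    refine fock_ext_basis fun p => ?_
    rw [ContinuousLinearMap.mul_apply, hS1, hS2']; rfl
  · intro r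
    refine fock_ext_basis fun p => ?_
    rw [ContinuousLinearMap.mul_apply, hT1, map_smul, hT2', smul_smul, hqq, one_smul]; rfl
  · intro i j hij
    refine fock_ext_basis fun p => ?_
    rw [ContinuousLinearMap.mul_apply, hS1, hS3]
    · rfl
    · intro p' h
      simp [hij] at h
  · intro i j hij
    refine fock_ext_basis fun p => ?_
    rw [ContinuousLinearMap.mul_apply, hT1, map_smul, hT3, smul_zero]
    · rfl
    · intro p' h
      simp [hij] at h
  · intro j r
    refine fock_ext_basis fun p => ?_
    rw [ContinuousLinearMap.smul_apply, ContinuousLinearMap.mul_apply,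
      ContinuousLinearMap.mul_apply, hT1, map_smul]
    obtain ⟨a, b⟩ := p
    by_cases h : ∃ a', a = j :: a'
    · obtain ⟨a', rfl⟩ := h
      rw [hS2', hS2', hT1, smul_smul]
      simp [pow_succ']
    · rw [hS3, hS3, map_zero, smul_zero, smul_zero]
      · intro p' h'
        exact h ⟨p'.1, (congrArg Prod.fst h').symm⟩
      · intro p' h'
        exact h ⟨p'.1, (congrArg Prod.fst h').symm⟩
  · intro j r
    refine fock_ext_basis fun p => ?_
    rw [ContinuousLinearMap.smul_apply, ContinuousLinearMap.mul_apply,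
      ContinuousLinearMap.mul_apply, hT1, map_smul, hS1, hS1, hT1, smul_smul]
    simp [pow_succ']
  · intro j
    exact hS3 j _ (by intro p h; simp at h)
  · intro r
    exact hT3 r _ (by intro p h; simp at h)
end
end
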